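/- Let α > 0, d ≥ 1, ℓ = ⌊α⌋⁻, m = C(ℓ+d, ℓ), and c_N > 0. There is a constant C > 0 depending only on α, d and c_N such that: for every set A = {w_1, …, w_m} ⊂ [0,1]^d that is a norming set for 𝒫_ℓ([0,1]^d) with norming constant c_N, every x ∈ [0,1]^d, and every ν ∈ (0,1), the Matérn kernel matrix K_{νA,νA} is invertible and ‖K_{νA,νA}⁻¹ K_{νA,νx} − V_A⁻¹ v_x‖₁ ≤ C (ν^{2(α−ℓ)} Λ + ν), where Λ = 1 if α ∉ ℕ and Λ = ln(1/ν) if α ∈ ℕ. -/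

import Mathlib

open Matrix MeasureTheory

noncomputable section

/-- The Matérn function with regularity `α` on ℝ^d (Fourier normalization):
`K_α(x) = ∫ cos⟨x,ξ⟩ (1+‖ξ‖₂²)^{-(α+d/2)} dξ`. -/
def matern (α : ℝ) (d : ℕ) (x : Fin d → ℝ) : ℝ :=
  ∫ ξ : Fin d → ℝ, Real.cos (∑ j, x j * ξ j) * (1 + ∑ j, ξ j ^ 2) ^ (-(α + (d : ℝ) / 2))

/-- `⌊α⌋⁻`, the largest integer strictly smaller than `α` (for `α > 0`). -/
def lbelow (α : ℝ) : ℕ := Nat.ceil α - 1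

/-- `α` is a (nonnegative) integer. -/
def IsNatVal (α : ℝ) : Prop := ∃ n : ℕ, α = n

/-- The Euclidean norm `‖x‖₂` on ℝ^d. -/
def nrm {d : ℕ} (x : Fin d → ℝ) : ℝ := Real.sqrt (∑ j, x j ^ 2)

/-- Partial derivative in the `j`-th coordinate. -/
def pder (d : ℕ) (j : Fin d) (f : (Fin d → ℝ) → ℝ) : (Fin d → ℝ) → ℝ :=
  fun x => fderiv ℝ f x (Pi.single j 1)

/-- The iterated partial derivative `∂^k` associated with a multi-index `k ∈ ℕ^d`. -/
def mder (d : ℕ) (k : Fin d → ℕ) (f : (Fin d → ℝ) → ℝ) : (Fin d → ℝ) → ℝ :=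
  (List.finRange d).foldr (fun j g => (pder d j)^[k j] g) f

/-- Mixed derivative `F^{(k₁,k₂)}(x₁,x₂) = ∂^{k₁}_{x₁} ∂^{k₂}_{x₂} F(x₁,x₂)`. -/
def mder2 (d : ℕ) (k₁ k₂ : Fin d → ℕ) (F : (Fin d → ℝ) → (Fin d → ℝ) → ℝ)
    (x₁ x₂ : Fin d → ℝ) : ℝ :=
  mder d k₁ (fun y => mder d k₂ (F y) x₂) x₁

/-- The Matérn kernel matrix `K_{A,A} = (K(w_i, w_j))_{i,j}`. -/
def maternMat (α : ℝ) (d : ℕ) {n : ℕ} (w : Fin n → Fin d → ℝ) :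
    Matrix (Fin n) (Fin n) ℝ :=
  Matrix.of fun i j => matern α d (w i - w j)

/-- The Matérn kernel column vector `K_{A,x} = (K(w_i, x))_i`. -/
def maternVec (α : ℝ) (d : ℕ) {n : ℕ} (w : Fin n → Fin d → ℝ) (x : Fin d → ℝ) :
    Fin n → ℝ :=
  fun i => matern α d (w i - x)

/-- The conditional kernel `K̃(x₁,x₂) = K(x₁,x₂) − K_{x₁,A} K_{A,A}⁻¹ K_{A,x₂}`. -/
def condK (α : ℝ) (d : ℕ) {n : ℕ} (w : Fin n → Fin d → ℝ) (x₁ x₂ : Fin d → ℝ) : ℝ :=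
  matern α d (x₁ - x₂) -
    maternVec α d w x₁ ⬝ᵥ ((maternMat α d w)⁻¹ *ᵥ maternVec α d w x₂)

/-- The unit cube `[0,1]^d`. -/
def unitCube (d : ℕ) : Set (Fin d → ℝ) := {x | ∀ t, 0 ≤ x t ∧ x t ≤ 1}

/-- `A = {w_1,…,w_m}` is a norming set for `𝒫_l(Ω)` with norming constant `c`. -/
def IsNorming {d : ℕ} (l : ℕ) (Ω : Set (Fin d → ℝ)) {m : ℕ}
    (w : Fin m → Fin d → ℝ) (c : ℝ) : Prop :=
  ∀ P : MvPolynomial (Fin d) ℝ, P.totalDegree ≤ l →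
    ∀ x ∈ Ω, |MvPolynomial.eval x P| ≤ c * ⨆ i : Fin m, |MvPolynomial.eval (w i) P|

/-- Axis-parallel cube with corner `z` and side length `s`. -/
def cube (d : ℕ) (z : Fin d → ℝ) (s : ℝ) : Set (Fin d → ℝ) :=
  {y | ∀ t, z t ≤ y t ∧ y t ≤ z t + s}

/-- Geometric hypotheses at scale `L` with constants `c_L, c_d, c_N`: `A ∪ {x}` lies in an
axis-parallel cube of side length at most `c_L·L`, the points `w_1,…,w_m, x` are pairwise at
`‖·‖_∞`-distance at least `c_d·L`, and `A` is a norming set for `𝒫_{⌊α⌋⁻}` of that cube with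
norming constant `c_N`. -/
def GeomHyp (α : ℝ) (d : ℕ) (cL cd cN L : ℝ) {m : ℕ}
    (w : Fin m → Fin d → ℝ) (x : Fin d → ℝ) : Prop :=
  ∃ z : Fin d → ℝ, ∃ s : ℝ, 0 ≤ s ∧ s ≤ cL * L ∧
    (∀ i, w i ∈ cube d z s) ∧ x ∈ cube d z s ∧
    (∀ i j, i ≠ j → ∃ t, cd * L ≤ |w i t - w j t|) ∧
    (∀ i, ∃ t, cd * L ≤ |w i t - x t|) ∧
    IsNorming (lbelow α) (cube d z s) w cN

/-- Degree-then-lexicographic strict order on multi-indices in ℕ^d. -/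
def degLex {d : ℕ} (k k' : Fin d → ℕ) : Prop :=
  (∑ j, k j < ∑ j, k' j) ∨
    ((∑ j, k j = ∑ j, k' j) ∧ ∃ i : Fin d, k i < k' i ∧ ∀ j : Fin d, j < i → k j = k' j)

/-- `kE` enumerates all multi-indices of ℕ^d in increasing degree-then-lex order. -/
def IsMultiIndexEnum (d : ℕ) (kE : ℕ → Fin d → ℕ) : Prop :=
  Function.Bijective kE ∧ ∀ i j : ℕ, i < j → degLex (kE i) (kE j)

/-- The vector `v_x = (x^{k_{(1)}}, …, x^{k_{(m)}})ᵀ`. -/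
def vVec {d : ℕ} (kE : ℕ → Fin d → ℕ) (m : ℕ) (x : Fin d → ℝ) : Fin m → ℝ :=
  fun i => ∏ t, x t ^ kE (i : ℕ) t

/-- The Vandermonde matrix `V_A` with entries `V_A[i,j] = (w_j)^{k_{(i)}}`. -/
def vand {d : ℕ} (kE : ℕ → Fin d → ℕ) (m : ℕ) (w : Fin m → Fin d → ℝ) :
    Matrix (Fin m) (Fin m) ℝ :=
  Matrix.of fun i j => ∏ t, w j t ^ kE (i : ℕ) t

theorem sum_abs_mulVec_le {ι : Type*} [Fintype ι] (A : Matrix ι ι ℝ) (u : ι → ℝ) {c : ℝ}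
    (hA : ∀ i j, |A i j| ≤ c) :
    ∑ i, |(A *ᵥ u) i| ≤ Fintype.card ι * c * ∑ j, |u j| := by
  have h : ∀ i, |(A *ᵥ u) i| ≤ c * ∑ j, |u j| := fun i => by
    rw [Matrix.mulVec, dotProduct, Finset.mul_sum]
    refine (Finset.abs_sum_le_sum_abs _ _).trans (Finset.sum_le_sum fun j _ => ?_)
    rw [abs_mul]
    exact mul_le_mul_of_nonneg_right (hA i j) (abs_nonneg _)
  calc ∑ i, |(A *ᵥ u) i| ≤ ∑ _i : ι, c * ∑ j, |u j| := Finset.sum_le_sum fun i _ => h i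
    _ = _ := by simp [Finset.sum_const, mul_assoc]

theorem abs_sum_mul_le {ι : Type*} [Fintype ι] (u f : ι → ℝ) {c : ℝ} (hf : ∀ i, |f i| ≤ c) :
    |∑ i, u i * f i| ≤ c * ∑ i, |u i| := by
  rw [Finset.mul_sum]
  refine (Finset.abs_sum_le_sum_abs _ _).trans (Finset.sum_le_sum fun j _ => ?_)
  rw [abs_mul, mul_comm]
  exact mul_le_mul_of_nonneg_right (hf j) (abs_nonneg _)

/-- Quantitative stability of Galerkin weights: if the trial elements are perturbations
`R i` of `∑ k, V k i D k q k` that are small relative to `p ≤ D k`, the weights of the Galerkin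
projection are close to the weights `Z v` reproducing the unperturbed part. -/
theorem galerkin_weights_stable {ι H : Type*} [Fintype ι] [DecidableEq ι] [AddCommGroup H]
    [Module ℝ H] (B : H →ₗ[ℝ] H →ₗ[ℝ] ℝ) {c : ℝ} (hc : 0 ≤ c) :
    ∃ κ : ℝ, 0 < κ ∧ ∀ (q R : ι → H) (Rx : H) (V Z M' : Matrix ι ι ℝ) (v D a : ι → ℝ) (p ε : ℝ),
      0 < p → (∀ k, p ≤ D k) → 0 ≤ ε → κ * ε ≤ 1 / 2 → V * Z = 1 → (∀ i j, |Z i j| ≤ c) →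
      M' * Matrix.of (fun k j => B (q k) (q j)) = 1 → (∀ i j, |M' i j| ≤ c) →
      (∀ k, |v k| ≤ 1) → (∀ k i, |B (q k) (R i)| ≤ p * ε) → (∀ k, |B (q k) Rx| ≤ p * ε) →
      (∀ k i, |B (R i) (q k)| ≤ p * ε) → (∀ i j, |B (R i) (R j)| ≤ p ^ 2 * ε) →
      (∀ i, |B (R i) Rx| ≤ p ^ 2 * ε) →
      (∀ i, B (∑ k, (V k i * D k) • q k + R i)
        ((∑ k, (v k * D k) • q k + Rx) -
          ∑ j, a j • (∑ k, (V k j * D k) • q k + R j)) = 0) →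
      ∑ i, |a i - (Z *ᵥ v) i| ≤ κ * ε := by
  set n : ℝ := (Fintype.card ι : ℝ) with hn
  have hn0 : 0 ≤ n := Nat.cast_nonneg _
  set κ₀ : ℝ := n * c * (n * (1 + n * c)) * (2 + n * c * n + n * c) with hκ₀
  have hκ₀0 : 0 ≤ κ₀ := by positivity
  refine ⟨(2 + 2 * n * c) * κ₀ + 1, by positivity, ?_⟩
  intro q R Rx V Z M' v D a p ε hp hD hε hκε hVZ hZ hM' hM'c hv hqR hqRx hRq hRR hRRx horth
  set e : ι → ℝ := fun k => v k - (V *ᵥ a) k with he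
  set u : ι → ℝ := fun k => D k * e k / p with hu
  set RE : H := Rx - ∑ j, a j • R j with hRE
  have hT : (∑ k, (v k * D k) • q k + Rx) - ∑ j, a j • (∑ k, (V k j * D k) • q k + R j)
      = ∑ k, (p * u k) • q k + RE := by
    have h1 : ∑ j, a j • ∑ k, (V k j * D k) • q k = ∑ k, ((V *ᵥ a) k * D k) • q k := by
      simp_rw [Finset.smul_sum, smul_smul]
      rw [Finset.sum_comm]
      refine Finset.sum_congr rfl fun k _ => ?_
      rw [← Finset.sum_smul]
      congr 1
      simp only [Matrix.mulVec, dotProduct, Finset.sum_mul]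
      exact Finset.sum_congr rfl fun j _ => by ring
    have h2 : ∀ k, p * u k = v k * D k - (V *ᵥ a) k * D k := fun k => by
      simp only [hu, he]; field_simp
    simp_rw [h2, sub_smul, Finset.sum_sub_distrib, smul_add, Finset.sum_add_distrib, h1, hRE]
    abel
  rw [hT] at horth
  set T : H := ∑ k, (p * u k) • q k + RE with hTdef
  set s : ℝ := ∑ k, |u k| with hs
  set l : ℝ := ∑ j, |a j| with hl
  have hs0 : 0 ≤ s := Finset.sum_nonneg fun _ _ => abs_nonneg _
  have hl0 : 0 ≤ l := Finset.sum_nonneg fun _ _ => abs_nonneg _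
  have hXRE : ∀ (X : H) (b : ℝ), |B X Rx| ≤ b → (∀ j, |B X (R j)| ≤ b) →
      |B X RE| ≤ b * (1 + l) := fun X b h1 h2 => by
    have : B X RE = B X Rx - ∑ j, a j * B X (R j) := by simp [hRE, map_sub, map_sum]
    rw [this]
    refine (abs_sub _ _).trans ?_
    have := abs_sum_mul_le a (fun j => B X (R j)) h2
    linarith
  have hBRT : ∀ i, |B (R i) T| ≤ p ^ 2 * ε * (s + 1 + l) := fun i => by
    have h1 : B (R i) T = p * (∑ k, u k * B (R i) (q k)) + B (R i) RE := by
      simp [hTdef, map_sum, Finset.mul_sum, mul_assoc]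
    have h2 := abs_sum_mul_le u (fun k => B (R i) (q k)) (fun k => hRq k i)
    have h3 := hXRE (R i) _ (hRRx i) (hRR i)
    rw [h1]
    refine (abs_add_le _ _).trans ?_
    rw [abs_mul, abs_of_pos hp]
    have := mul_le_mul_of_nonneg_left h2 hp.le
    calc _ ≤ _ := add_le_add this h3
      _ = _ := by ring
  have hkey : ∀ k, D k * B (q k) T = -∑ i, Z i k * B (R i) T := fun k => by
    have h1 : ∑ i, Z i k • (∑ k', (V k' i * D k') • q k' + R i)
        = D k • q k + ∑ i, Z i k • R i := by
      simp_rw [smul_add, Finset.sum_add_distrib, Finset.smul_sum, smul_smul]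
      congr 1
      rw [Finset.sum_comm]
      have : ∀ k', ∑ i, (Z i k * (V k' i * D k')) • q k' = ((1 : Matrix ι ι ℝ) k' k * D k') • q k' :=
        fun k' => by
          rw [← Finset.sum_smul, ← hVZ, Matrix.mul_apply, Finset.sum_mul]
          congr 1
          exact Finset.sum_congr rfl fun i _ => by ring
      simp_rw [this]
      rw [Finset.sum_eq_single k]
      · simp
      · intro b _ hb; simp [Matrix.one_apply_ne hb]
      · simp
    have h2 : B (∑ i, Z i k • (∑ k', (V k' i * D k') • q k' + R i)) T = 0 := by
      rw [map_sum, LinearMap.sum_apply]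
      refine Finset.sum_eq_zero fun i _ => ?_
      rw [map_smul, LinearMap.smul_apply, horth i, smul_zero]
    rw [h1] at h2
    simp only [map_add, map_smul, map_sum, LinearMap.add_apply, LinearMap.smul_apply,
      LinearMap.sum_apply, smul_eq_mul] at h2
    linarith
  have hqT : ∀ k, |B (q k) T| ≤ n * c * (p * ε * (s + 1 + l)) := fun k => by
    have hDk : 0 < D k := hp.trans_le (hD k)
    have h1 : |D k * B (q k) T| ≤ p ^ 2 * ε * (s + 1 + l) * (n * c) := by
      rw [hkey k, abs_neg]
      refine (abs_sum_mul_le (fun i => Z i k) _ hBRT).trans ?_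
      refine mul_le_mul_of_nonneg_left ?_ (by positivity)
      calc ∑ i, |Z i k| ≤ ∑ _i : ι, c := Finset.sum_le_sum fun i _ => hZ i k
        _ = n * c := by simp [hn]
    rw [abs_mul, abs_of_pos hDk] at h1
    have h2 : p * |B (q k) T| ≤ D k * |B (q k) T| :=
      mul_le_mul_of_nonneg_right (hD k) (abs_nonneg _)
    have h3 : p * |B (q k) T| ≤ p * (n * c * (p * ε * (s + 1 + l))) := by
      refine h2.trans (h1.trans (le_of_eq (by ring)))
    exact le_of_mul_le_mul_left h3 hp
  have hMu : ∀ k, |(Matrix.of (fun k j => B (q k) (q j)) *ᵥ u) k|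
      ≤ (1 + n * c) * ε * (s + 1 + l) := fun k => by
    have h1 : B (q k) T = p * (Matrix.of (fun k j => B (q k) (q j)) *ᵥ u) k + B (q k) RE := by
      simp [hTdef, map_sum, Finset.mul_sum, mul_assoc, Matrix.mulVec, dotProduct, mul_comm (u _)]
    have h2 := hXRE (q k) _ (hqRx k) (hqR k)
    have h3 : |p * (Matrix.of (fun k j => B (q k) (q j)) *ᵥ u) k|
        ≤ p * ((1 + n * c) * ε * (s + 1 + l)) := by
      have : p * (Matrix.of (fun k j => B (q k) (q j)) *ᵥ u) k = B (q k) T - B (q k) RE := by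
        linarith
      rw [this]
      refine (abs_sub _ _).trans ((add_le_add (hqT k) h2).trans ?_)
      have : 0 ≤ p * ε * s := by positivity
      nlinarith
    rw [abs_mul, abs_of_pos hp] at h3
    exact le_of_mul_le_mul_left h3 hp
  have hsle : s ≤ n * c * (n * ((1 + n * c) * ε * (s + 1 + l))) := by
    have h1 : u = M' *ᵥ (Matrix.of (fun k j => B (q k) (q j)) *ᵥ u) := by
      rw [Matrix.mulVec_mulVec, hM', Matrix.one_mulVec]
    have h2 := sum_abs_mulVec_le M' (Matrix.of (fun k j => B (q k) (q j)) *ᵥ u) hM'c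
    rw [← h1] at h2
    refine h2.trans (mul_le_mul_of_nonneg_left ?_ (by positivity))
    calc _ ≤ ∑ _k : ι, (1 + n * c) * ε * (s + 1 + l) := Finset.sum_le_sum fun k _ => hMu k
      _ = _ := by simp [hn]
  have hZV : Z * V = 1 := mul_eq_one_comm.mp hVZ
  have hdiff : ∑ i, |a i - (Z *ᵥ v) i| ≤ n * c * s := by
    have h1 : ∀ i, a i - (Z *ᵥ v) i = -(Z *ᵥ e) i := fun i => by
      have h2 : e = v - V *ᵥ a := rfl
      rw [h2, Matrix.mulVec_sub, Matrix.mulVec_mulVec, hZV, Matrix.one_mulVec]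
      simp
    simp_rw [h1, abs_neg]
    refine (sum_abs_mulVec_le Z e hZ).trans (mul_le_mul_of_nonneg_left ?_ (by positivity))
    refine Finset.sum_le_sum fun k _ => ?_
    have h3 : |u k| = D k / p * |e k| := by
      have : u k = D k / p * e k := by simp only [hu]; ring
      rw [this, abs_mul, abs_of_nonneg (div_nonneg (hp.le.trans (hD k)) hp.le)]
    rw [h3]
    exact le_mul_of_one_le_left (abs_nonneg _) ((one_le_div hp).mpr (hD k))
  have hl_le : l ≤ n * c * n + n * c * s := by
    have h1 : l ≤ ∑ i, (|a i - (Z *ᵥ v) i| + |(Z *ᵥ v) i|) :=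
      Finset.sum_le_sum fun i _ => by
        calc |a i| = |(a i - (Z *ᵥ v) i) + (Z *ᵥ v) i| := by rw [sub_add_cancel]
          _ ≤ _ := abs_add_le _ _
    rw [Finset.sum_add_distrib] at h1
    have h2 := sum_abs_mulVec_le Z v hZ
    have h3 : ∑ j, |v j| ≤ n := by
      calc _ ≤ ∑ _j : ι, (1 : ℝ) := Finset.sum_le_sum fun k _ => hv k
        _ = n := by simp [hn]
    have h4 : n * c * ∑ j, |v j| ≤ n * c * n := mul_le_mul_of_nonneg_left h3 (by positivity)
    linarith
  have hs1 : s ≤ κ₀ * ε * (s + 1) := by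
    refine hsle.trans ?_
    have h1 : s + 1 + l ≤ (2 + n * c * n + n * c) * (s + 1) := by
      have : 0 ≤ n * c * n * s := by positivity
      have : 0 ≤ n * c := by positivity
      nlinarith
    calc n * c * (n * ((1 + n * c) * ε * (s + 1 + l)))
        = n * c * (n * (1 + n * c)) * ε * (s + 1 + l) := by ring
      _ ≤ n * c * (n * (1 + n * c)) * ε * ((2 + n * c * n + n * c) * (s + 1)) :=
        mul_le_mul_of_nonneg_left h1 (by positivity)
      _ = _ := by rw [hκ₀]; ring
  have hκε' : κ₀ * ε ≤ 1 / 2 := by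
    have : 0 ≤ n * c * κ₀ * ε := by positivity
    have : 0 ≤ κ₀ * ε := by positivity
    nlinarith
  have hs2 : s ≤ 2 * (κ₀ * ε) := by nlinarith
  refine hdiff.trans ?_
  have h5 : n * c * s ≤ n * c * (2 * (κ₀ * ε)) := mul_le_mul_of_nonneg_left hs2 (by positivity)
  have : 0 ≤ κ₀ * ε := by positivity
  nlinarith

/-- The remainder of order `n` of the exponential series at `i t`. -/
def expRem (n : ℕ) (t : ℝ) : ℂ :=
  Complex.exp (Complex.I * t) - ∑ k ∈ Finset.range n, (Complex.I * t) ^ k / k.factorial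

theorem norm_I_mul_pow_div_factorial_le (k : ℕ) (t : ℝ) :
    ‖(Complex.I * t) ^ k / (k.factorial : ℂ)‖ ≤ |t| ^ k := by
  rw [norm_div, norm_pow, norm_mul, Complex.norm_I, one_mul, Complex.norm_real, Real.norm_eq_abs,
    Complex.norm_natCast]
  exact div_le_self (by positivity) (by exact_mod_cast Nat.one_le_iff_ne_zero.mpr (Nat.factorial_ne_zero k))

theorem norm_expRem_le (n : ℕ) (t : ℝ) : ‖expRem n t‖ ≤ (n + 3) * |t| ^ n := by
  rcases le_or_gt |t| 1 with h | h
  · have h1 := Complex.norm_exp_sub_sum_le_norm_mul_exp (Complex.I * t) n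
    rw [norm_mul, Complex.norm_I, one_mul, Complex.norm_real, Real.norm_eq_abs] at h1
    refine h1.trans ?_
    rw [mul_comm]
    refine mul_le_mul_of_nonneg_right ?_ (by positivity)
    have h2 : Real.exp |t| ≤ Real.exp 1 := Real.exp_le_exp.mpr h
    have := Real.exp_one_lt_d9
    have : (0 : ℝ) ≤ n := n.cast_nonneg
    linarith
  · refine (norm_sub_le _ _).trans ?_
    rw [Complex.norm_exp_I_mul_ofReal]
    have h1 : ‖∑ k ∈ Finset.range n, (Complex.I * t) ^ k / (k.factorial : ℂ)‖ ≤ n * |t| ^ n := by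
      refine (norm_sum_le _ _).trans ?_
      calc _ ≤ ∑ _k ∈ Finset.range n, |t| ^ n := Finset.sum_le_sum fun k hk =>
            (norm_I_mul_pow_div_factorial_le k t).trans
              (pow_le_pow_right₀ h.le (Finset.mem_range.mp hk).le)
        _ = _ := by simp
    have h2 : 1 ≤ |t| ^ n := one_le_pow₀ h.le
    linarith

theorem expRem_succ (n : ℕ) (t : ℝ) :
    expRem (n + 1) t = expRem n t - (Complex.I * t) ^ n / n.factorial := by
  rw [expRem, expRem, Finset.sum_range_succ]; ring

theorem norm_expRem_succ_le (n : ℕ) (t : ℝ) : ‖expRem (n + 1) t‖ ≤ (n + 4) * |t| ^ n := by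
  rw [expRem_succ]
  have h1 := norm_expRem_le n t
  have h2 := norm_I_mul_pow_div_factorial_le n t
  have := norm_sub_le (expRem n t) ((Complex.I * t) ^ n / n.factorial)
  linarith

/-- Both bounds for the remainder of order `l + 1` combined. -/
theorem norm_expRem_succ_le_min (l : ℕ) {t T : ℝ} (hT : |t| ≤ T) :
    ‖expRem (l + 1) t‖ ≤ (l + 4) * (T ^ l * min 1 T) := by
  have hT0 : 0 ≤ T := (abs_nonneg t).trans hT
  rw [mul_min_of_nonneg _ _ (by positivity : 0 ≤ T ^ l), mul_min_of_nonneg _ _ (by positivity)]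
  refine le_min ?_ ?_
  · rw [mul_one]
    exact (norm_expRem_succ_le l t).trans (by gcongr)
  · have h := norm_expRem_le (l + 1) t
    push_cast at h
    rw [← pow_succ]
    calc _ ≤ _ := h
      _ ≤ (l + 4) * |t| ^ (l + 1) := by gcongr ?_ * _; linarith
      _ ≤ _ := by gcongr

/-- In the direction `i ^ l` the remainder of order `l + 1` gains one more order. -/
theorem abs_re_conj_I_pow_mul_expRem_le (l : ℕ) {t T : ℝ} (hT : |t| ≤ T) :
    |((starRingEnd ℂ) (Complex.I ^ l) * expRem (l + 1) t).re|
      ≤ (l + 5) * (T ^ l * min 1 (T ^ 2)) := by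
  have hT0 : 0 ≤ T := (abs_nonneg t).trans hT
  have hnorm : ‖(starRingEnd ℂ) (Complex.I ^ l)‖ = 1 := by simp
  rw [mul_min_of_nonneg _ _ (by positivity : 0 ≤ T ^ l), mul_min_of_nonneg _ _ (by positivity)]
  refine le_min ?_ ?_
  · refine (Complex.abs_re_le_norm _).trans ?_
    rw [norm_mul, hnorm, one_mul, mul_one]
    calc _ ≤ _ := norm_expRem_succ_le l t
      _ ≤ (l + 5) * |t| ^ l := by gcongr ?_ * _; linarith
      _ ≤ _ := by gcongr
  · have h1 : ((starRingEnd ℂ) (Complex.I ^ l) * expRem (l + 1) t).re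
        = ((starRingEnd ℂ) (Complex.I ^ l) * expRem (l + 2) t).re := by
      rw [expRem_succ (l + 1), mul_sub, Complex.sub_re]
      have h2 : (starRingEnd ℂ) (Complex.I ^ l) * ((Complex.I * t) ^ (l + 1) / ((l + 1).factorial : ℂ))
          = Complex.I * ((t ^ (l + 1) / (l + 1).factorial : ℝ) : ℂ) := by
        have h3 : (starRingEnd ℂ) (Complex.I ^ l) * Complex.I ^ l = 1 := by
          rw [← Complex.normSq_eq_conj_mul_self]; simp [Complex.normSq_I]
        push_cast
        rw [mul_pow, pow_succ Complex.I]
        linear_combination (Complex.I * t ^ (l + 1) / ((l + 1).factorial : ℂ)) * h3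
      rw [h2, Complex.I_mul_re, Complex.ofReal_im, neg_zero, sub_zero]
    rw [h1]
    refine (Complex.abs_re_le_norm _).trans ?_
    rw [norm_mul, hnorm, one_mul, ← pow_add]
    have h := norm_expRem_le (l + 2) t
    push_cast at h
    calc _ ≤ _ := h
      _ ≤ (l + 5) * |t| ^ (l + 2) := by gcongr ?_ * _; linarith
      _ ≤ _ := by gcongr

theorem card_piAntidiag_univ_fin (d n : ℕ) :
    (Finset.piAntidiag (Finset.univ : Finset (Fin d)) n).card = d.multichoose n := by
  have h := Finset.card_finsuppAntidiag_nat_eq_multichoose (s := (Finset.univ : Finset (Fin d))) n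
  rw [Finset.card_univ, Fintype.card_fin] at h
  rw [← h]
  refine (Finset.card_bij (fun (f : Fin d →₀ ℕ) _ => (f : Fin d → ℕ)) ?_ ?_ ?_).symm
  · intro f hf
    simpa using hf
  · intro f _ g _ hfg
    exact DFunLike.coe_injective hfg
  · intro g hg
    exact ⟨Finsupp.equivFunOnFinite.symm g, by simpa using hg, by simp⟩

/-- The multi-indices of total degree at most `l`. -/
def multiIndices (d l : ℕ) : Finset (Fin d → ℕ) :=
  (Finset.range (l + 1)).biUnion fun n => Finset.piAntidiag Finset.univ n

theorem mem_multiIndices {d l : ℕ} {k : Fin d → ℕ} : k ∈ multiIndices d l ↔ ∑ j, k j ≤ l := by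
  simp [multiIndices]

theorem pairwiseDisjoint_piAntidiag (d : ℕ) (s : Set ℕ) :
    s.PairwiseDisjoint fun n => Finset.piAntidiag (Finset.univ : Finset (Fin d)) n := by
  intro a _ b _ hab
  refine Finset.disjoint_left.mpr fun k hk hk' => hab ?_
  simp only [Finset.mem_piAntidiag] at hk hk'
  exact hk.1.symm.trans hk'.1

theorem card_multiIndices (d l : ℕ) : (multiIndices d l).card = (l + d).choose l := by
  rw [multiIndices, Finset.card_biUnion (fun a ha b hb => pairwiseDisjoint_piAntidiag d _ ha hb)]
  simp_rw [card_piAntidiag_univ_fin]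
  rw [Nat.sum_range_multichoose, Nat.choose_symm_add]

theorem IsMultiIndexEnum.lt_choose_iff {d : ℕ} {kE : ℕ → Fin d → ℕ} (h : IsMultiIndexEnum d kE)
    (l i : ℕ) : i < (l + d).choose l ↔ ∑ j, kE i j ≤ l := by
  classical
  have hbij : Function.Bijective kE := h.1
  have hmono : ∀ i j, i ≤ j → ∑ t, kE i t ≤ ∑ t, kE j t := by
    intro i j hij
    rcases hij.eq_or_lt with rfl | hlt
    · exact le_rfl
    · rcases h.2 i j hlt with h1 | h1
      · exact h1.le
      · exact h1.1.le
  set S : Finset ℕ := (multiIndices d l).preimage kE hbij.1.injOn with hS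
  have hmem : ∀ i, i ∈ S ↔ ∑ j, kE i j ≤ l := fun i => by
    rw [hS, Finset.mem_preimage, mem_multiIndices]
  have hcard : S.card = (l + d).choose l := by
    rw [← card_multiIndices, hS, Finset.card_preimage]
    congr 1
    refine Finset.filter_true_of_mem fun k _ => ?_
    exact hbij.2 k
  have hlow : ∀ i j, i ≤ j → j ∈ S → i ∈ S := fun i j hij hj => by
    rw [hmem] at hj ⊢
    exact (hmono i j hij).trans hj
  rw [← hmem, ← hcard]
  constructor
  · intro hi
    by_contra hn
    have hsub : S ⊆ Finset.range i := fun j hj => by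
      rw [Finset.mem_range]
      by_contra hij
      exact hn (hlow i j (not_lt.mp hij) hj)
    have := Finset.card_le_card hsub
    rw [Finset.card_range] at this
    omega
  · intro hi
    have hsub : Finset.range (i + 1) ⊆ S := fun j hj =>
      hlow j i (Nat.lt_succ_iff.mp (Finset.mem_range.mp hj)) hi
    have := Finset.card_le_card hsub
    rw [Finset.card_range] at this
    omega

theorem IsMultiIndexEnum.sum_eq {d : ℕ} {kE : ℕ → Fin d → ℕ} (h : IsMultiIndexEnum d kE)
    (l : ℕ) {G : Type*} [AddCommMonoid G] (f : (Fin d → ℕ) → G) :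
    ∑ i : Fin ((l + d).choose l), f (kE i)
      = ∑ n ∈ Finset.range (l + 1), ∑ k ∈ Finset.piAntidiag Finset.univ n, f k := by
  rw [← Finset.sum_biUnion (pairwiseDisjoint_piAntidiag d _)]
  refine Finset.sum_bij (fun i _ => kE i) ?_ ?_ ?_ ?_
  · intro i _
    exact mem_multiIndices.mpr ((h.lt_choose_iff l i).mp i.2)
  · intro i _ j _ hij
    exact Fin.ext (h.1.1 hij)
  · intro k hk
    obtain ⟨i, rfl⟩ := h.1.2 k
    exact ⟨⟨i, (h.lt_choose_iff l i).mpr (mem_multiIndices.mp hk)⟩, Finset.mem_univ _, rfl⟩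
  · intro i _
    rfl

/-- The Taylor monomial `(iξ)^k / k!` of the plane waves. -/
def waveMonomial {d : ℕ} (k : Fin d → ℕ) (ξ : Fin d → ℝ) : ℂ :=
  Complex.I ^ (∑ t, k t) * ((∏ t, ξ t ^ k t / (k t).factorial : ℝ) : ℂ)

/-- The plane wave `ξ ↦ exp(i⟨y, ξ⟩)`. -/
def planeWave {d : ℕ} (y ξ : Fin d → ℝ) : ℂ := Complex.exp (Complex.I * ((∑ t, y t * ξ t : ℝ) : ℂ))

theorem sum_waveMonomial_piAntidiag {d : ℕ} (n : ℕ) (ν : ℝ) (y ξ : Fin d → ℝ) :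
    ∑ k ∈ Finset.piAntidiag Finset.univ n,
        (((∏ t, y t ^ k t) * ν ^ (∑ t, k t) : ℝ) : ℂ) * waveMonomial k ξ
      = (Complex.I * ((∑ t, (ν * y t) * ξ t : ℝ) : ℂ)) ^ n / n.factorial := by
  rw [mul_pow, mul_div_assoc, ← Complex.ofReal_pow, Finset.sum_pow_eq_sum_piAntidiag]
  push_cast
  rw [Finset.sum_div, Finset.mul_sum]
  refine Finset.sum_congr rfl fun k hk => ?_
  have hk1 : ∑ t, k t = n := (Finset.mem_piAntidiag.mp hk).1
  have hm := Nat.multinomial_spec Finset.univ k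
  rw [hk1] at hm
  have hm' : (∏ t, ((k t).factorial : ℂ)) * (Nat.multinomial Finset.univ k : ℂ) = n.factorial := by
    exact_mod_cast hm
  have hne : (∏ t, ((k t).factorial : ℂ)) ≠ 0 :=
    Finset.prod_ne_zero_iff.mpr fun t _ => by exact_mod_cast (k t).factorial_ne_zero
  have hne' : (n.factorial : ℂ) ≠ 0 := by exact_mod_cast n.factorial_ne_zero
  rw [waveMonomial, hk1]
  push_cast
  simp_rw [mul_pow, Finset.prod_mul_distrib, Finset.prod_div_distrib, Finset.prod_pow_eq_pow_sum, hk1]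
  rw [← hm']
  have hne2 : (Nat.multinomial Finset.univ k : ℂ) ≠ 0 := by
    intro h0; rw [h0, mul_zero] at hm'; exact hne' hm'.symm
  field_simp

theorem planeWave_eq_sum_add {d : ℕ} {kE : ℕ → Fin d → ℕ} (h : IsMultiIndexEnum d kE)
    (l : ℕ) (ν : ℝ) (y ξ : Fin d → ℝ) :
    planeWave (fun t => ν * y t) ξ =
      ∑ i : Fin ((l + d).choose l),
        ((vVec kE ((l + d).choose l) y i * ν ^ (∑ t, kE i t) : ℝ) : ℂ) * waveMonomial (kE i) ξ
      + expRem (l + 1) (∑ t, (ν * y t) * ξ t) := by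
  have h1 := h.sum_eq l
    (fun k => (((∏ t, y t ^ k t) * ν ^ (∑ t, k t) : ℝ) : ℂ) * waveMonomial k ξ)
  simp_rw [sum_waveMonomial_piAntidiag] at h1
  simp only [vVec]
  rw [h1, expRem, planeWave]
  ring

/-- The spectral density `(1 + ‖ξ‖₂²)^{-(α + d/2)}` of the Matérn kernel. -/
def maternWeight (α : ℝ) (d : ℕ) (ξ : Fin d → ℝ) : ℝ := (1 + ∑ j, ξ j ^ 2) ^ (-(α + (d : ℝ) / 2))

theorem maternWeight_pos (α : ℝ) (d : ℕ) (ξ : Fin d → ℝ) : 0 < maternWeight α d ξ := by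
  unfold maternWeight; positivity

theorem continuous_maternWeight (α : ℝ) (d : ℕ) : Continuous (maternWeight α d) := by
  unfold maternWeight
  refine Continuous.rpow_const (by fun_prop) fun ξ => Or.inl ?_
  positivity

theorem norm_sq_le_sum_sq {d : ℕ} (ξ : Fin d → ℝ) : ‖ξ‖ ^ 2 ≤ ∑ j, ξ j ^ 2 := by
  have h : ‖ξ‖ ≤ Real.sqrt (∑ j, ξ j ^ 2) := by
    refine (pi_norm_le_iff_of_nonneg (Real.sqrt_nonneg _)).mpr fun j => ?_
    refine Real.le_sqrt_of_sq_le ?_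
    rw [Real.norm_eq_abs, sq_abs]
    exact Finset.single_le_sum (f := fun j => ξ j ^ 2) (fun _ _ => sq_nonneg _) (Finset.mem_univ j)
  calc ‖ξ‖ ^ 2 ≤ Real.sqrt (∑ j, ξ j ^ 2) ^ 2 := by gcongr
    _ = _ := Real.sq_sqrt (Finset.sum_nonneg fun _ _ => sq_nonneg _)

theorem maternWeight_le_one_add_norm {α : ℝ} (hα : 0 < α) {d : ℕ} (ξ : Fin d → ℝ) :
    maternWeight α d ξ ≤ 2 ^ ((2 * α + d) / 2) * (1 + ‖ξ‖) ^ (-(2 * α + d)) := by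
  refine le_trans ?_ (rpow_neg_one_add_norm_sq_le ξ (by positivity : 0 < 2 * α + d))
  rw [maternWeight, show -(α + (d : ℝ) / 2) = -(2 * α + d) / 2 by ring]
  refine Real.rpow_le_rpow_of_nonpos (by positivity) (by linarith [norm_sq_le_sum_sq ξ]) ?_
  have : (0 : ℝ) ≤ d := d.cast_nonneg
  linarith

theorem maternWeight_le_norm_rpow {α : ℝ} (hα : 0 < α) {d : ℕ} {ξ : Fin d → ℝ} (hξ : ξ ≠ 0) :
    maternWeight α d ξ ≤ ‖ξ‖ ^ (-(2 * α + d)) := by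
  have h0 : 0 < ‖ξ‖ := norm_pos_iff.mpr hξ
  have : (0 : ℝ) ≤ d := d.cast_nonneg
  calc maternWeight α d ξ ≤ (‖ξ‖ ^ 2) ^ (-(α + (d : ℝ) / 2)) :=
        Real.rpow_le_rpow_of_nonpos (by positivity) (by linarith [norm_sq_le_sum_sq ξ])
          (by linarith)
    _ = _ := by
      rw [← Real.rpow_natCast ‖ξ‖ 2, ← Real.rpow_mul h0.le]
      congr 1; push_cast; ring

theorem integrable_one_add_norm_rpow_mul_maternWeight {α s : ℝ} (hα : 0 < α) (hs : s < 2 * α)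
    (d : ℕ) : Integrable fun ξ : Fin d → ℝ => (1 + ‖ξ‖) ^ s * maternWeight α d ξ := by
  have h1 : Integrable fun ξ : Fin d → ℝ =>
      2 ^ ((2 * α + d) / 2) * (1 + ‖ξ‖) ^ (-(2 * α + d - s)) := by
    refine (integrable_one_add_norm ?_).const_mul _
    rw [Module.finrank_fin_fun]
    linarith
  refine h1.mono' ?_ (Filter.Eventually.of_forall fun ξ => ?_)
  · refine Continuous.aestronglyMeasurable ?_
    refine Continuous.mul ?_ (continuous_maternWeight α d)
    refine Continuous.rpow_const (by fun_prop) fun ξ => Or.inl ?_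
    positivity
  · have hpos := maternWeight_pos α d ξ
    have h2 : (0 : ℝ) < 1 + ‖ξ‖ := by positivity
    rw [Real.norm_of_nonneg (by positivity), show -(2 * α + d - s) = s + -(2 * α + d) by ring,
      Real.rpow_add h2]
    have := mul_le_mul_of_nonneg_left (maternWeight_le_one_add_norm hα ξ)
      (by positivity : 0 ≤ (1 + ‖ξ‖) ^ s)
    linarith

theorem integrable_one_add_norm_pow_mul_maternWeight {α : ℝ} {n : ℕ} (hn : (n : ℝ) < 2 * α)
    (d : ℕ) : Integrable fun ξ : Fin d → ℝ => (1 + ‖ξ‖) ^ n * maternWeight α d ξ := by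
  have h0 : (0 : ℝ) ≤ n := n.cast_nonneg
  simpa using integrable_one_add_norm_rpow_mul_maternWeight (by linarith : 0 < α) hn d

/-- Continuous functions on `ℝ^d` of growth at most `(1 + ‖ξ‖)^l`. -/
def growthSpace (d l : ℕ) : Submodule ℝ ((Fin d → ℝ) → ℂ) where
  carrier := {f | Continuous f ∧ ∃ C : ℝ, ∀ ξ, ‖f ξ‖ ≤ C * (1 + ‖ξ‖) ^ l}
  zero_mem' := ⟨continuous_const, 0, fun ξ => by simp⟩
  add_mem' := by
    rintro f g ⟨hf, C, hC⟩ ⟨hg, C', hC'⟩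
    refine ⟨hf.add hg, C + C', fun ξ => ?_⟩
    rw [add_mul]
    exact (norm_add_le _ _).trans (add_le_add (hC ξ) (hC' ξ))
  smul_mem' := by
    rintro c f ⟨hf, C, hC⟩
    refine ⟨hf.const_smul c, |c| * C, fun ξ => ?_⟩
    rw [Pi.smul_apply, norm_smul, Real.norm_eq_abs, mul_assoc]
    exact mul_le_mul_of_nonneg_left (hC ξ) (abs_nonneg c)

theorem integrable_re_conj_mul_mul_maternWeight {α : ℝ} {d l : ℕ} (hl : (l : ℝ) < α)
    (f g : growthSpace d l) :
    Integrable fun ξ => ((starRingEnd ℂ) (f.1 ξ) * g.1 ξ).re * maternWeight α d ξ := by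
  obtain ⟨hf, C, hC⟩ := f.2
  obtain ⟨hg, C', hC'⟩ := g.2
  have h1 := (integrable_one_add_norm_pow_mul_maternWeight (α := α) (n := l + l)
    (by push_cast; linarith) d).const_mul (C * C')
  refine h1.mono' ?_ (Filter.Eventually.of_forall fun ξ => ?_)
  · refine Continuous.aestronglyMeasurable (Continuous.mul ?_ (continuous_maternWeight α d))
    exact Complex.continuous_re.comp ((Complex.continuous_conj.comp hf).mul hg)
  · rw [norm_mul, Real.norm_of_nonneg (maternWeight_pos α d ξ).le, ← mul_assoc]
    refine mul_le_mul_of_nonneg_right ?_ (maternWeight_pos α d ξ).le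
    refine (Complex.abs_re_le_norm _).trans ?_
    rw [norm_mul, Complex.norm_conj, pow_add]
    calc ‖f.1 ξ‖ * ‖g.1 ξ‖ ≤ (C * (1 + ‖ξ‖) ^ l) * (C' * (1 + ‖ξ‖) ^ l) :=
          mul_le_mul (hC ξ) (hC' ξ) (norm_nonneg _) ((norm_nonneg _).trans (hC ξ))
      _ = _ := by ring

/-- The real inner product of `L²(maternWeight)` on functions of moderate growth. -/
def spectralForm {α : ℝ} {d l : ℕ} (hl : (l : ℝ) < α) :
    growthSpace d l →ₗ[ℝ] growthSpace d l →ₗ[ℝ] ℝ :=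
  LinearMap.mk₂ ℝ
    (fun f g => ∫ ξ, ((starRingEnd ℂ) (f.1 ξ) * g.1 ξ).re * maternWeight α d ξ)
    (fun f f' g => by
      rw [← integral_add (integrable_re_conj_mul_mul_maternWeight hl f g)
        (integrable_re_conj_mul_mul_maternWeight hl f' g)]
      refine integral_congr_ae (Filter.Eventually.of_forall fun ξ => ?_)
      simp only [Submodule.coe_add, Pi.add_apply, map_add, add_mul, Complex.add_re])
    (fun c f g => by
      rw [smul_eq_mul, ← integral_const_mul]
      refine integral_congr_ae (Filter.Eventually.of_forall fun ξ => ?_)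
      simp only [Submodule.coe_smul, Pi.smul_apply, Complex.real_smul, map_mul, Complex.conj_ofReal,
        mul_assoc, Complex.re_ofReal_mul])
    (fun f g g' => by
      rw [← integral_add (integrable_re_conj_mul_mul_maternWeight hl f g)
        (integrable_re_conj_mul_mul_maternWeight hl f g')]
      refine integral_congr_ae (Filter.Eventually.of_forall fun ξ => ?_)
      simp only [Submodule.coe_add, Pi.add_apply, mul_add, add_mul, Complex.add_re])
    (fun c f g => by
      rw [smul_eq_mul, ← integral_const_mul]
      refine integral_congr_ae (Filter.Eventually.of_forall fun ξ => ?_)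
      simp only [Submodule.coe_smul, Pi.smul_apply, Complex.real_smul, mul_left_comm _ (c : ℂ),
        mul_assoc, Complex.re_ofReal_mul])

theorem spectralForm_apply {α : ℝ} {d l : ℕ} (hl : (l : ℝ) < α) (f g : growthSpace d l) :
    spectralForm hl f g = ∫ ξ, ((starRingEnd ℂ) (f.1 ξ) * g.1 ξ).re * maternWeight α d ξ := rfl

theorem spectralForm_comm {α : ℝ} {d l : ℕ} (hl : (l : ℝ) < α) (f g : growthSpace d l) :
    spectralForm hl f g = spectralForm hl g f := by
  rw [spectralForm_apply, spectralForm_apply]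
  refine integral_congr_ae (Filter.Eventually.of_forall fun ξ => ?_)
  simp only [Complex.mul_re, Complex.conj_re, Complex.conj_im]
  ring

theorem abs_spectralForm_le {α : ℝ} {d l : ℕ} (hl : (l : ℝ) < α) (f g : growthSpace d l)
    {φ : (Fin d → ℝ) → ℝ} (hφ : Integrable fun ξ => φ ξ * maternWeight α d ξ) {C : ℝ}
    (h : ∀ ξ, |((starRingEnd ℂ) (f.1 ξ) * g.1 ξ).re| ≤ C * φ ξ) :
    |spectralForm hl f g| ≤ C * ∫ ξ, φ ξ * maternWeight α d ξ := by
  rw [spectralForm_apply, ← integral_const_mul]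
  rw [← Real.norm_eq_abs]
  refine norm_integral_le_of_norm_le (hφ.const_mul C) (Filter.Eventually.of_forall fun ξ => ?_)
  rw [norm_mul, Real.norm_of_nonneg (maternWeight_pos α d ξ).le, ← mul_assoc]
  exact mul_le_mul_of_nonneg_right (h ξ) (maternWeight_pos α d ξ).le

theorem eq_zero_of_spectralForm_self {α : ℝ} {d l : ℕ} (hl : (l : ℝ) < α) (f : growthSpace d l)
    (h : spectralForm hl f f = 0) : f = 0 := by
  have hpt : ∀ ξ, ((starRingEnd ℂ) (f.1 ξ) * f.1 ξ).re = Complex.normSq (f.1 ξ) := fun ξ => by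
    rw [← Complex.normSq_eq_conj_mul_self, Complex.ofReal_re]
  have hi := integrable_re_conj_mul_mul_maternWeight hl f f
  rw [spectralForm_apply] at h
  simp_rw [hpt] at h hi
  rw [integral_eq_zero_iff_of_nonneg
    (fun ξ => mul_nonneg (Complex.normSq_nonneg _) (maternWeight_pos α d ξ).le) hi] at h
  have hc : Continuous fun ξ => Complex.normSq (f.1 ξ) * maternWeight α d ξ :=
    (Complex.continuous_normSq.comp f.2.1).mul (continuous_maternWeight α d)
  have h2 := (hc.ae_eq_iff_eq volume continuous_const).mp h
  refine Subtype.ext (funext fun ξ => ?_)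
  have h3 : Complex.normSq (f.1 ξ) * maternWeight α d ξ = 0 := congrFun h2 ξ
  exact Complex.normSq_eq_zero.mp ((mul_eq_zero.mp h3).resolve_right (maternWeight_pos α d ξ).ne')

theorem det_spectralForm_ne_zero {α : ℝ} {d l : ℕ} (hl : (l : ℝ) < α) {ι : Type*} [Fintype ι]
    [DecidableEq ι] {f : ι → growthSpace d l} (hf : LinearIndependent ℝ f) :
    (Matrix.of fun i j => spectralForm hl (f i) (f j)).det ≠ 0 := by
  intro hdet
  obtain ⟨c, hc, hc0⟩ := Matrix.exists_mulVec_eq_zero_iff.mpr hdet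
  refine hc ?_
  have h1 : spectralForm hl (∑ i, c i • f i) (∑ i, c i • f i) = 0 := by
    rw [LinearMap.map_sum₂]
    refine Finset.sum_eq_zero fun i _ => ?_
    have h2 := congrFun hc0 i
    simp only [Matrix.mulVec, dotProduct, Matrix.of_apply, Pi.zero_apply] at h2
    rw [map_smul, LinearMap.smul_apply, map_sum]
    simp_rw [map_smul, smul_eq_mul, mul_comm (c _)]
    rw [h2, zero_mul]
  exact funext (Fintype.linearIndependent_iff.mp hf c (eq_zero_of_spectralForm_self hl _ h1))

theorem continuous_planeWave {d : ℕ} (y : Fin d → ℝ) : Continuous (planeWave y) := by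
  unfold planeWave; fun_prop

theorem norm_planeWave {d : ℕ} (y ξ : Fin d → ℝ) : ‖planeWave y ξ‖ = 1 :=
  Complex.norm_exp_I_mul_ofReal _

/-- The plane wave as a function of moderate growth. -/
def waveElem (d l : ℕ) (y : Fin d → ℝ) : growthSpace d l :=
  ⟨planeWave y, continuous_planeWave y, 1, fun ξ => by
    rw [norm_planeWave, one_mul]
    exact one_le_pow₀ (by linarith [norm_nonneg ξ])⟩

theorem norm_waveMonomial_le {d : ℕ} (k : Fin d → ℕ) (ξ : Fin d → ℝ) :
    ‖waveMonomial k ξ‖ ≤ ‖ξ‖ ^ (∑ t, k t) := by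
  rw [waveMonomial, norm_mul, norm_pow, Complex.norm_I, one_pow, one_mul, Complex.norm_real,
    Real.norm_eq_abs, Finset.abs_prod, ← Finset.prod_pow_eq_pow_sum]
  refine Finset.prod_le_prod (fun _ _ => abs_nonneg _) fun t _ => ?_
  rw [abs_div, abs_pow, Nat.abs_cast]
  refine (div_le_self (by positivity) ?_).trans ?_
  · exact_mod_cast Nat.one_le_iff_ne_zero.mpr (Nat.factorial_ne_zero _)
  · have := norm_le_pi_norm ξ t
    rw [Real.norm_eq_abs] at this
    gcongr

/-- The Taylor monomial as a function of moderate growth. -/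
def monomialElem {d l : ℕ} (k : Fin d → ℕ) (hk : ∑ t, k t ≤ l) : growthSpace d l :=
  ⟨waveMonomial k, by unfold waveMonomial; fun_prop, 1, fun ξ => by
    rw [one_mul]
    refine (norm_waveMonomial_le k ξ).trans ?_
    calc ‖ξ‖ ^ (∑ t, k t) ≤ (1 + ‖ξ‖) ^ (∑ t, k t) := by gcongr; linarith
      _ ≤ _ := pow_le_pow_right₀ (by linarith [norm_nonneg ξ]) hk⟩

theorem spectralForm_waveElem {α : ℝ} {d l : ℕ} (hl : (l : ℝ) < α) (y y' : Fin d → ℝ) :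
    spectralForm hl (waveElem d l y) (waveElem d l y') = matern α d (y - y') := by
  rw [spectralForm_apply, matern]
  refine integral_congr_ae (Filter.Eventually.of_forall fun ξ => ?_)
  simp only [maternWeight, waveElem, planeWave]
  congr 1
  rw [← Complex.exp_conj, ← Complex.exp_add]
  have : (starRingEnd ℂ) (Complex.I * ((∑ t, y t * ξ t : ℝ) : ℂ))
      + Complex.I * ((∑ t, y' t * ξ t : ℝ) : ℂ)
      = ((-(∑ t, (y - y') t * ξ t) : ℝ) : ℂ) * Complex.I := by
    rw [map_mul, Complex.conj_I, Complex.conj_ofReal]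
    simp only [Pi.sub_apply, sub_mul, Finset.sum_sub_distrib]
    push_cast
    ring
  rw [this, Complex.exp_ofReal_mul_I_re, Real.cos_neg]

theorem linearIndependent_waveElem {d l : ℕ} {ι : Type*} [Fintype ι] {y : ι → Fin d → ℝ}
    (hy : Function.Injective y) (hsmall : ∀ i j t, |y i t - y j t| ≤ 1) :
    LinearIndependent ℝ fun i => waveElem d l (y i) := by
  let χ : ι → (Multiplicative (Fin d → ℝ) →* ℂ) := fun i =>
    { toFun := fun ξ => planeWave (y i) ξ.toAdd
      map_one' := by simp [planeWave]
      map_mul' := fun a b => by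
        simp only [planeWave, toAdd_mul, Pi.add_apply, mul_add, Finset.sum_add_distrib,
          Complex.ofReal_add, Complex.exp_add] }
  have hχ : Function.Injective χ := by
    intro i j hij
    refine hy (funext fun t => ?_)
    have h1 := DFunLike.congr_fun hij (Multiplicative.ofAdd (Pi.single t (1 : ℝ)))
    have h2 : Complex.exp (Complex.I * (y i t : ℂ)) = Complex.exp (Complex.I * (y j t : ℂ)) := by
      have h0 : ∀ i, χ i (Multiplicative.ofAdd (Pi.single t (1 : ℝ)))
          = Complex.exp (Complex.I * (y i t : ℂ)) := fun i => by
        change planeWave (y i) (Pi.single t (1 : ℝ)) = _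
        simp only [planeWave, Pi.single_apply, mul_ite, mul_one, mul_zero, Finset.sum_ite_eq',
          Finset.mem_univ, if_true]
      rw [h0, h0] at h1
      exact h1
    obtain ⟨n, hn⟩ := Complex.exp_eq_exp_iff_exists_int.mp h2
    have h3 : y i t - y j t = n * (2 * Real.pi) := by
      have h4 := congrArg Complex.im hn
      simp at h4
      linarith
    have h5 := hsmall i j t
    rw [h3, abs_mul, abs_of_pos Real.two_pi_pos] at h5
    have hn0 : n = 0 := by
      by_contra hne
      have : (1 : ℝ) ≤ |(n : ℝ)| := by exact_mod_cast Int.one_le_abs hne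
      nlinarith [Real.pi_gt_three]
    rw [hn0] at h3
    simp at h3
    linarith
  have hli := (linearIndependent_monoidHom (Multiplicative (Fin d → ℝ)) ℂ).comp χ hχ
  rw [Fintype.linearIndependent_iff] at hli ⊢
  intro c hc i
  have h6 : ∑ i, (c i : ℂ) • (χ i : Multiplicative (Fin d → ℝ) → ℂ) = 0 := by
    funext ξ
    have h7 := congrFun (congrArg Subtype.val hc) ξ.toAdd
    have h8 : ∑ i, (c i : ℂ) * planeWave (y i) ξ.toAdd = 0 := by
      simpa [waveElem, Finset.sum_apply] using h7
    rw [Finset.sum_apply, Pi.zero_apply, ← h8]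
    rfl
  exact_mod_cast hli (fun i => (c i : ℂ)) h6 i

theorem linearIndependent_monomialElem {d l : ℕ} {ι : Type*} [Fintype ι] {k : ι → Fin d → ℕ}
    (hk : Function.Injective k) (hkl : ∀ i, ∑ t, k i t ≤ l) :
    LinearIndependent ℝ fun i => monomialElem (k i) (hkl i) := by
  classical
  rw [Fintype.linearIndependent_iff]
  intro c hc i
  let a : ι → ℂ := fun i => Complex.I ^ (∑ t, k i t) * (∏ t, ((k i t).factorial : ℂ)⁻¹)
  have ha : a i ≠ 0 := mul_ne_zero (pow_ne_zero _ Complex.I_ne_zero)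
    (Finset.prod_ne_zero_iff.mpr fun t _ => inv_ne_zero (by exact_mod_cast (k i t).factorial_ne_zero))
  let P : MvPolynomial (Fin d) ℂ :=
    ∑ i, MvPolynomial.monomial (Finsupp.equivFunOnFinite.symm (k i)) (c i * a i)
  have hP : P = 0 := by
    refine MvPolynomial.funext_set (fun _ => Set.range ((↑) : ℝ → ℂ))
      (fun _ => Set.infinite_range_of_injective Complex.ofReal_injective) fun x hx => ?_
    choose ξ hξ using fun t => hx t (Set.mem_univ t)
    have h7 := congrFun (congrArg Subtype.val hc) ξ
    rw [map_zero]
    simp only [P, map_sum, MvPolynomial.eval_monomial]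
    have h8 : ∑ i, (c i : ℂ) * waveMonomial (k i) ξ = 0 := by
      simpa [monomialElem, Finset.sum_apply] using h7
    rw [← h8]
    refine Finset.sum_congr rfl fun j _ => ?_
    rw [Finsupp.prod_fintype _ _ (fun _ => pow_zero _)]
    simp only [a, waveMonomial, ← hξ, Finsupp.equivFunOnFinite_symm_apply_apply]
    push_cast
    simp only [div_eq_mul_inv, Finset.prod_mul_distrib]
    ring
  have h9 := congrArg (MvPolynomial.coeff (Finsupp.equivFunOnFinite.symm (k i))) hP
  simp only [P, MvPolynomial.coeff_sum, MvPolynomial.coeff_monomial, MvPolynomial.coeff_zero] at h9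
  rw [Finset.sum_eq_single i] at h9
  · simpa [ha] using h9
  · intro j _ hj
    rw [if_neg]
    exact fun h => hj (hk (Finsupp.equivFunOnFinite.symm.injective h))
  · simp

theorem lbelow_add_one {α : ℝ} (hα : 0 < α) : lbelow α + 1 = ⌈α⌉₊ := by
  have : 0 < ⌈α⌉₊ := Nat.ceil_pos.mpr hα
  unfold lbelow; omega

theorem lbelow_lt {α : ℝ} (hα : 0 < α) : (lbelow α : ℝ) < α := by
  have h1 := Nat.ceil_lt_add_one hα.le
  rw [← lbelow_add_one hα] at h1
  push_cast at h1
  linarith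

theorem lt_lbelow_add_one {α : ℝ} (hα : 0 < α) (h : ¬ IsNatVal α) : α < lbelow α + 1 := by
  have h1 := Nat.le_ceil α
  rw [← lbelow_add_one hα] at h1
  refine lt_of_le_of_ne (by exact_mod_cast h1) fun h2 => h ⟨lbelow α + 1, by exact_mod_cast h2⟩

theorem eq_lbelow_add_one {α : ℝ} (hα : 0 < α) (h : IsNatVal α) : α = lbelow α + 1 := by
  obtain ⟨n, rfl⟩ := h
  have h1 := lbelow_add_one hα
  rw [Nat.ceil_natCast] at h1
  exact_mod_cast h1.symm

/-- Pointwise envelope for the pairings with Taylor remainders at scale `ν`. -/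
def remEnvelope {d : ℕ} (l : ℕ) (ν : ℝ) (ξ : Fin d → ℝ) : ℝ :=
  ν * (1 + ‖ξ‖) ^ (2 * l) + ‖ξ‖ ^ (2 * l) * min 1 ((ν * ‖ξ‖) ^ 2)

theorem integrable_norm_pow_mul_min_mul_maternWeight {α : ℝ} {l : ℕ} (hl : (l : ℝ) < α) (d : ℕ)
    (ν : ℝ) : Integrable fun ξ : Fin d → ℝ =>
      ‖ξ‖ ^ (2 * l) * min 1 ((ν * ‖ξ‖) ^ 2) * maternWeight α d ξ := by
  have h1 := integrable_one_add_norm_pow_mul_maternWeight (α := α) (n := 2 * l)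
    (by push_cast; linarith) d
  refine h1.mono' ?_ (Filter.Eventually.of_forall fun ξ => ?_)
  · exact Continuous.aestronglyMeasurable
      (Continuous.mul (by fun_prop) (continuous_maternWeight α d))
  · have hw := (maternWeight_pos α d ξ).le
    have hm : 0 ≤ min 1 ((ν * ‖ξ‖) ^ 2) := le_min zero_le_one (sq_nonneg _)
    rw [Real.norm_of_nonneg (by positivity)]
    refine mul_le_mul_of_nonneg_right ?_ hw
    calc ‖ξ‖ ^ (2 * l) * min 1 ((ν * ‖ξ‖) ^ 2) ≤ ‖ξ‖ ^ (2 * l) * 1 := by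
          gcongr; exact min_le_left _ _
      _ ≤ _ := by rw [mul_one]; gcongr; linarith

theorem integrable_remEnvelope_mul_maternWeight {α : ℝ} {l : ℕ} (hl : (l : ℝ) < α) (d : ℕ)
    (ν : ℝ) : Integrable fun ξ : Fin d → ℝ => remEnvelope l ν ξ * maternWeight α d ξ := by
  have h1 := (integrable_one_add_norm_pow_mul_maternWeight (α := α) (n := 2 * l)
    (by push_cast; linarith) d).const_mul ν
  refine (h1.add (integrable_norm_pow_mul_min_mul_maternWeight hl d ν)).congr
    (Filter.Eventually.of_forall fun ξ => ?_)
  simp only [remEnvelope, Pi.add_apply]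
  ring

theorem integral_remEnvelope_le_of_integer {α : ℝ} {l : ℕ} (hl : α = l + 1) (d : ℕ) :
    ∃ C : ℝ, 0 ≤ C ∧ ∀ ν : ℝ, 0 < ν → ν < 1 →
      ∫ ξ : Fin d → ℝ, remEnvelope l ν ξ * maternWeight α d ξ ≤ C * ν := by
  have hi := integrable_one_add_norm_pow_mul_maternWeight (α := α) (n := 2 * l + 1)
    (by push_cast; linarith) d
  refine ⟨2 * ∫ ξ : Fin d → ℝ, (1 + ‖ξ‖) ^ (2 * l + 1) * maternWeight α d ξ,
    mul_nonneg zero_le_two (integral_nonneg fun ξ =>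
      mul_nonneg (by positivity) (maternWeight_pos α d ξ).le), fun ν hν hν1 => ?_⟩
  rw [mul_assoc, mul_comm _ ν, ← mul_assoc, ← integral_const_mul]
  refine integral_mono (integrable_remEnvelope_mul_maternWeight (by linarith) d ν)
    (hi.const_mul _) fun ξ => ?_
  simp only
  rw [← mul_assoc]
  refine mul_le_mul_of_nonneg_right ?_ (maternWeight_pos α d ξ).le
  have h0 := norm_nonneg ξ
  have hmin : min 1 ((ν * ‖ξ‖) ^ 2) ≤ ν * ‖ξ‖ := by
    rcases le_total (ν * ‖ξ‖) 1 with h | h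
    · refine (min_le_right _ _).trans ?_
      rw [sq]
      exact mul_le_of_le_one_left (by positivity) h
    · exact (min_le_left _ _).trans h
  calc remEnvelope l ν ξ
      ≤ ν * (1 + ‖ξ‖) ^ (2 * l) + ‖ξ‖ ^ (2 * l) * (ν * ‖ξ‖) := by
        unfold remEnvelope; gcongr
    _ = ν * (1 + ‖ξ‖) ^ (2 * l) + ν * ‖ξ‖ ^ (2 * l + 1) := by ring
    _ ≤ ν * (1 + ‖ξ‖) ^ (2 * l + 1) + ν * (1 + ‖ξ‖) ^ (2 * l + 1) := by
        gcongr
        · linarith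
        · omega
        · linarith
    _ = _ := by ring

theorem integrable_norm_rpow_mul_min {d : ℕ} (hd : 1 ≤ d) {δ : ℝ} (h0 : 0 < δ) (h1 : δ < 1) :
    Integrable fun ξ : Fin d → ℝ => ‖ξ‖ ^ (-(d + 2 * δ)) * min 1 (‖ξ‖ ^ 2) := by
  have : Nonempty (Fin d) := ⟨⟨0, hd⟩⟩
  have key := integrable_fun_norm_addHaar (volume : Measure (Fin d → ℝ))
    (f := fun r : ℝ => r ^ (-(d + 2 * δ)) * min 1 (r ^ 2))
  refine key.mpr ?_
  rw [Module.finrank_fin_fun]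
  have heq : ∀ r : ℝ, 0 < r → r ^ (d - 1) • (r ^ (-(d + 2 * δ)) * min 1 (r ^ 2))
      = r ^ (-1 - 2 * δ) * min 1 (r ^ 2) := fun r hr => by
    rw [smul_eq_mul, ← mul_assoc, ← Real.rpow_natCast r (d - 1), ← Real.rpow_add hr]
    congr 2
    push_cast [Nat.cast_sub hd]
    ring
  rw [← Set.Ioc_union_Ioi_eq_Ioi (zero_le_one' ℝ)]
  refine IntegrableOn.union ?_ ?_
  · have hint : IntegrableOn (fun r : ℝ => r ^ (1 - 2 * δ)) (Set.Ioc 0 1) :=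
      (intervalIntegrable_iff_integrableOn_Ioc_of_le zero_le_one).mp
        (intervalIntegral.intervalIntegrable_rpow' (by linarith))
    refine hint.congr_fun (fun r hr => ?_) measurableSet_Ioc
    simp only
    rw [heq r hr.1, min_eq_right (pow_le_one₀ hr.1.le hr.2), ← Real.rpow_natCast r 2,
      ← Real.rpow_add hr.1]
    congr 1; push_cast; ring
  · have hint : IntegrableOn (fun r : ℝ => r ^ (-1 - 2 * δ)) (Set.Ioi 1) :=
      integrableOn_Ioi_rpow_of_lt (by linarith) zero_lt_one
    refine hint.congr_fun (fun r hr => ?_) measurableSet_Ioi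
    have hr' : (1 : ℝ) < r := hr
    simp only
    rw [heq r (by linarith), min_eq_left (one_le_pow₀ hr'.le), mul_one]

theorem norm_pow_mul_min_mul_maternWeight_le {α : ℝ} (hα : 0 < α) {d l : ℕ} {ν : ℝ} (hν : 0 < ν)
    (ξ : Fin d → ℝ) :
    ‖ξ‖ ^ (2 * l) * min 1 ((ν * ‖ξ‖) ^ 2) * maternWeight α d ξ ≤
      ν ^ ((d : ℝ) + 2 * (α - l)) *
        (‖ν • ξ‖ ^ (-(d + 2 * (α - l))) * min 1 (‖ν • ξ‖ ^ 2)) := by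
  rw [norm_smul, Real.norm_of_nonneg hν.le]
  rcases eq_or_ne ξ 0 with rfl | hξ
  · simp
  · have h0 : 0 < ‖ξ‖ := norm_pos_iff.mpr hξ
    have hm : 0 ≤ min 1 ((ν * ‖ξ‖) ^ 2) := le_min zero_le_one (sq_nonneg _)
    calc ‖ξ‖ ^ (2 * l) * min 1 ((ν * ‖ξ‖) ^ 2) * maternWeight α d ξ
        ≤ ‖ξ‖ ^ (2 * l) * min 1 ((ν * ‖ξ‖) ^ 2) * ‖ξ‖ ^ (-(2 * α + d)) := by
          gcongr; exact maternWeight_le_norm_rpow hα hξ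
      _ = (‖ξ‖ ^ (2 * l) * ‖ξ‖ ^ (-(2 * α + d))) * min 1 ((ν * ‖ξ‖) ^ 2) := by ring
      _ = _ := by
        rw [← mul_assoc]
        congr 1
        rw [Real.mul_rpow hν.le h0.le, ← mul_assoc, ← Real.rpow_add hν, ← Real.rpow_natCast ‖ξ‖,
          ← Real.rpow_add h0, add_neg_cancel, Real.rpow_zero, one_mul]
        congr 1; push_cast; ring

theorem integral_remEnvelope_le {α : ℝ} {d l : ℕ} (hd : 1 ≤ d) (hl : (l : ℝ) < α)
    (hl' : α < l + 1) :
    ∃ C : ℝ, 0 ≤ C ∧ ∀ ν : ℝ, 0 < ν → ν < 1 →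
      ∫ ξ : Fin d → ℝ, remEnvelope l ν ξ * maternWeight α d ξ ≤ C * (ν ^ (2 * (α - l)) + ν) := by
  have hα : 0 < α := lt_of_le_of_lt l.cast_nonneg hl
  set g : (Fin d → ℝ) → ℝ := fun ξ => ‖ξ‖ ^ (-(d + 2 * (α - l))) * min 1 (‖ξ‖ ^ 2) with hg
  have hgi : Integrable g := integrable_norm_rpow_mul_min hd (by linarith) (by linarith)
  have hi := integrable_one_add_norm_pow_mul_maternWeight (α := α) (n := 2 * l)
    (by push_cast; linarith) d
  set C₁ := ∫ ξ : Fin d → ℝ, (1 + ‖ξ‖) ^ (2 * l) * maternWeight α d ξ with hC₁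
  set C₂ := ∫ ξ, g ξ with hC₂
  have hC₁0 : 0 ≤ C₁ := integral_nonneg fun ξ => mul_nonneg (by positivity) (maternWeight_pos α d ξ).le
  have hC₂0 : 0 ≤ C₂ := integral_nonneg fun ξ => by
    simp only [hg, Pi.zero_apply]; positivity
  refine ⟨C₁ + C₂, by positivity, fun ν hν hν1 => ?_⟩
  have hsplit : ∫ ξ : Fin d → ℝ, remEnvelope l ν ξ * maternWeight α d ξ = ν * C₁ +
      ∫ ξ : Fin d → ℝ, ‖ξ‖ ^ (2 * l) * min 1 ((ν * ‖ξ‖) ^ 2) * maternWeight α d ξ := by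
    rw [hC₁, ← integral_const_mul, ← integral_add (hi.const_mul ν)
      (integrable_norm_pow_mul_min_mul_maternWeight hl d ν)]
    refine integral_congr_ae (Filter.Eventually.of_forall fun ξ => ?_)
    simp only [remEnvelope]; ring
  have h2 : ∫ ξ : Fin d → ℝ, ‖ξ‖ ^ (2 * l) * min 1 ((ν * ‖ξ‖) ^ 2) * maternWeight α d ξ
      ≤ ν ^ (2 * (α - l)) * C₂ := by
    calc _ ≤ ∫ ξ : Fin d → ℝ, ν ^ ((d : ℝ) + 2 * (α - l)) * g (ν • ξ) :=
          integral_mono (integrable_norm_pow_mul_min_mul_maternWeight hl d ν)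
            ((hgi.comp_smul hν.ne').const_mul _)
            (fun ξ => norm_pow_mul_min_mul_maternWeight_le hα hν ξ)
      _ = _ := by
        rw [integral_const_mul, Measure.integral_comp_smul, Module.finrank_fin_fun, smul_eq_mul,
          abs_of_pos (by positivity), ← mul_assoc, add_comm, Real.rpow_add hν, Real.rpow_natCast,
          mul_assoc _ (ν ^ d), mul_inv_cancel₀ (by positivity), mul_one]
  rw [hsplit]
  have h3 : 0 ≤ ν ^ (2 * (α - l)) := by positivity
  nlinarith [mul_nonneg hC₁0 h3, mul_nonneg hC₂0 hν.le]

theorem abs_sum_scaled_le {d : ℕ} {ν : ℝ} (hν : 0 < ν) {y : Fin d → ℝ} (hy : y ∈ unitCube d)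
    (ξ : Fin d → ℝ) : |∑ t, (ν * y t) * ξ t| ≤ d * (ν * ‖ξ‖) := by
  refine (Finset.abs_sum_le_sum_abs _ _).trans ?_
  calc ∑ t, |ν * y t * ξ t| ≤ ∑ _t : Fin d, ν * ‖ξ‖ := Finset.sum_le_sum fun t _ => by
        have h1 := norm_le_pi_norm ξ t
        rw [Real.norm_eq_abs] at h1
        rw [abs_mul, abs_mul, abs_of_pos hν, abs_of_nonneg (hy t).1, mul_assoc]
        refine mul_le_mul_of_nonneg_left ?_ hν.le
        exact (mul_le_of_le_one_left (abs_nonneg _) (hy t).2).trans h1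
    _ = _ := by simp

theorem min_one_mul_le {D s : ℝ} (hD : 1 ≤ D) : min 1 (D * s) ≤ D * min 1 s := by
  rw [mul_min_of_nonneg _ _ (by linarith), mul_one]
  exact min_le_min_right _ hD

theorem abs_re_conj_waveMonomial_mul_expRem_le {d l : ℕ} (hd : 1 ≤ d) {ν : ℝ} (hν : 0 < ν)
    {y : Fin d → ℝ} (hy : y ∈ unitCube d) {k : Fin d → ℕ} (hk : ∑ t, k t ≤ l) (ξ : Fin d → ℝ) :
    |((starRingEnd ℂ) (waveMonomial k ξ) * expRem (l + 1) (∑ t, (ν * y t) * ξ t)).re|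
      ≤ (l + 5) ^ 2 * d ^ (2 * l + 2) * ν ^ l * remEnvelope l ν ξ := by
  have hD : (1 : ℝ) ≤ d := by exact_mod_cast hd
  have hl0 : (0 : ℝ) ≤ l := l.cast_nonneg
  have hT := abs_sum_scaled_le hν hy ξ
  have hz := norm_nonneg ξ
  set z := ‖ξ‖ with hzdef
  have hm : 0 ≤ min 1 ((ν * z) ^ 2) := le_min zero_le_one (sq_nonneg _)
  have hc : (l : ℝ) + 5 ≤ (l + 5) ^ 2 := by nlinarith
  unfold remEnvelope
  rw [← hzdef]
  rcases hk.eq_or_lt with hkl | hkl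
  · set p : ℝ := ∏ t, ξ t ^ k t / (k t).factorial with hp
    have hpz : |p| ≤ z ^ l := by
      have := norm_waveMonomial_le k ξ
      rwa [waveMonomial, norm_mul, norm_pow, Complex.norm_I, one_pow, one_mul, Complex.norm_real,
        Real.norm_eq_abs, hkl] at this
    have h1 : ((starRingEnd ℂ) (waveMonomial k ξ) * expRem (l + 1) (∑ t, (ν * y t) * ξ t)).re
        = p * ((starRingEnd ℂ) (Complex.I ^ l) * expRem (l + 1) (∑ t, (ν * y t) * ξ t)).re := by
      rw [waveMonomial, hkl, ← hp, map_mul, Complex.conj_ofReal, mul_comm _ (p : ℂ), mul_assoc,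
        Complex.re_ofReal_mul]
    rw [h1, abs_mul]
    have hmin : min 1 ((d * (ν * z)) ^ 2) ≤ d ^ 2 * min 1 ((ν * z) ^ 2) := by
      rw [mul_pow]; exact min_one_mul_le (one_le_pow₀ hD)
    calc _ ≤ z ^ l * ((l + 5) * ((d * (ν * z)) ^ l * min 1 ((d * (ν * z)) ^ 2))) :=
          mul_le_mul hpz (abs_re_conj_I_pow_mul_expRem_le l hT) (abs_nonneg _) (by positivity)
      _ ≤ z ^ l * ((l + 5) * ((d * (ν * z)) ^ l * (d ^ 2 * min 1 ((ν * z) ^ 2)))) := by gcongr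
      _ = (l + 5) * d ^ (l + 2) * ν ^ l * (z ^ (2 * l) * min 1 ((ν * z) ^ 2)) := by
          rw [mul_pow, mul_pow]; ring
      _ ≤ (l + 5) ^ 2 * d ^ (2 * l + 2) * ν ^ l * (z ^ (2 * l) * min 1 ((ν * z) ^ 2)) := by
          gcongr
          omega
      _ ≤ _ := by
          gcongr
          exact le_add_of_nonneg_left (by positivity)
  · calc _ ≤ ‖(starRingEnd ℂ) (waveMonomial k ξ) * expRem (l + 1) (∑ t, (ν * y t) * ξ t)‖ :=
          Complex.abs_re_le_norm _
      _ ≤ z ^ (∑ t, k t) * ((l + 4) * ((d * (ν * z)) ^ l * min 1 (d * (ν * z)))) := by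
          rw [norm_mul, Complex.norm_conj]
          exact mul_le_mul (norm_waveMonomial_le k ξ) (norm_expRem_succ_le_min l hT)
            (norm_nonneg _) (by positivity)
      _ ≤ (1 + z) ^ (∑ t, k t) * ((l + 5) * ((d * (ν * z)) ^ l * (d * (ν * z)))) := by
          gcongr
          · linarith
          · norm_num
          · exact min_le_right _ _
      _ = (l + 5) * d ^ (l + 1) * ν ^ l * (ν * (z ^ (l + 1) * (1 + z) ^ (∑ t, k t))) := by
          rw [mul_pow, mul_pow]; ring
      _ ≤ (l + 5) * d ^ (l + 1) * ν ^ l * (ν * ((1 + z) ^ (l + 1) * (1 + z) ^ (∑ t, k t))) := by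
          gcongr; linarith
      _ ≤ (l + 5) ^ 2 * d ^ (2 * l + 2) * ν ^ l * (ν * (1 + z) ^ (2 * l)) := by
          rw [← pow_add]
          gcongr
          · omega
          · omega
          · linarith
          · omega
      _ ≤ _ := by
          gcongr
          exact le_add_of_nonneg_right (by positivity)

theorem abs_re_conj_expRem_mul_expRem_le {d l : ℕ} (hd : 1 ≤ d) {ν : ℝ} (hν : 0 < ν)
    {y y' : Fin d → ℝ} (hy : y ∈ unitCube d) (hy' : y' ∈ unitCube d) (ξ : Fin d → ℝ) :
    |((starRingEnd ℂ) (expRem (l + 1) (∑ t, (ν * y t) * ξ t)) *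
        expRem (l + 1) (∑ t, (ν * y' t) * ξ t)).re|
      ≤ (l + 5) ^ 2 * d ^ (2 * l + 2) * (ν ^ l) ^ 2 * remEnvelope l ν ξ := by
  have hD : (1 : ℝ) ≤ d := by exact_mod_cast hd
  have hT := abs_sum_scaled_le hν hy ξ
  have hT' := abs_sum_scaled_le hν hy' ξ
  have hz := norm_nonneg ξ
  unfold remEnvelope
  set z := ‖ξ‖ with hzdef
  have hm0 : 0 ≤ min 1 (ν * z) := le_min zero_le_one (by positivity)
  have hm1 : 0 ≤ min 1 (d * (ν * z)) := le_min zero_le_one (by positivity)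
  have hsq : min 1 (ν * z) ^ 2 ≤ min 1 ((ν * z) ^ 2) :=
    le_min (pow_le_one₀ hm0 (min_le_left _ _)) (pow_le_pow_left₀ hm0 (min_le_right _ _) 2)
  have hb : ∀ t : ℝ, |t| ≤ d * (ν * z) →
      ‖expRem (l + 1) t‖ ≤ (l + 5) * ((d * (ν * z)) ^ l * (d * min 1 (ν * z))) := fun t ht => by
    calc _ ≤ _ := norm_expRem_succ_le_min l ht
      _ ≤ _ := by
        gcongr
        · norm_num
        · exact min_one_mul_le hD
  calc _ ≤ ‖(starRingEnd ℂ) (expRem (l + 1) (∑ t, (ν * y t) * ξ t)) *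
        expRem (l + 1) (∑ t, (ν * y' t) * ξ t)‖ := Complex.abs_re_le_norm _
    _ ≤ ((l + 5) * ((d * (ν * z)) ^ l * (d * min 1 (ν * z)))) *
        ((l + 5) * ((d * (ν * z)) ^ l * (d * min 1 (ν * z)))) := by
        rw [norm_mul, Complex.norm_conj]
        exact mul_le_mul (hb _ hT) (hb _ hT') (norm_nonneg _) (by positivity)
    _ = (l + 5) ^ 2 * d ^ (2 * l + 2) * (ν ^ l) ^ 2 * (z ^ (2 * l) * min 1 (ν * z) ^ 2) := by
        rw [mul_pow, mul_pow]; ring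
    _ ≤ (l + 5) ^ 2 * d ^ (2 * l + 2) * (ν ^ l) ^ 2 * (z ^ (2 * l) * min 1 ((ν * z) ^ 2)) := by
        gcongr
    _ ≤ _ := by
        gcongr
        exact le_add_of_nonneg_left (by positivity)

theorem continuous_matern {α : ℝ} (hα : 0 < α) (d : ℕ) : Continuous (matern α d) := by
  have h0 : Integrable fun ξ : Fin d → ℝ => maternWeight α d ξ := by
    simpa using integrable_one_add_norm_pow_mul_maternWeight (α := α) (n := 0)
      (by push_cast; linarith) d
  have hrw : matern α d = fun x => ∫ ξ : Fin d → ℝ,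
      Real.cos (∑ j, x j * ξ j) * maternWeight α d ξ := by
    funext x; simp only [matern, maternWeight]
  rw [hrw]
  refine continuous_of_dominated (fun x => ?_)
    (fun x => Filter.Eventually.of_forall fun ξ => ?_) h0
    (Filter.Eventually.of_forall fun ξ => ?_)
  · exact Continuous.aestronglyMeasurable
      (Continuous.mul (by fun_prop) (continuous_maternWeight α d))
  · rw [norm_mul, Real.norm_of_nonneg (maternWeight_pos α d ξ).le, Real.norm_eq_abs]
    exact mul_le_of_le_one_left (maternWeight_pos α d ξ).le (Real.abs_cos_le_one _)
  · exact Continuous.mul (by fun_prop) continuous_const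

theorem isCompact_unitCube (d : ℕ) : IsCompact (unitCube d) := by
  have : unitCube d = Set.pi Set.univ fun _ => Set.Icc (0 : ℝ) 1 := by
    ext x; simp only [unitCube, Set.mem_ofPred_eq, Set.mem_pi, Set.mem_univ, Set.mem_Icc, true_imp_iff]
  rw [this]
  exact isCompact_univ_pi fun _ => isCompact_Icc

theorem eq_zero_of_eval_unitCube {d : ℕ} (P : MvPolynomial (Fin d) ℝ)
    (h : ∀ x ∈ unitCube d, MvPolynomial.eval x P = 0) : P = 0 := by
  refine MvPolynomial.funext_set (fun _ => Set.Icc (0 : ℝ) 1)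
    (fun _ => Set.Icc_infinite zero_lt_one) fun x hx => ?_
  rw [map_zero]
  exact h x fun t => by simpa using hx t (Set.mem_univ t)

/-- The polynomial with coefficients `c` in the monomial basis enumerated by `kE`. -/
def enumPoly {d : ℕ} (kE : ℕ → Fin d → ℕ) {m : ℕ} (c : Fin m → ℝ) : MvPolynomial (Fin d) ℝ :=
  ∑ i : Fin m, MvPolynomial.monomial (Finsupp.equivFunOnFinite.symm (kE i)) (c i)

theorem eval_enumPoly {d : ℕ} (kE : ℕ → Fin d → ℕ) {m : ℕ} (c : Fin m → ℝ) (x : Fin d → ℝ) :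
    MvPolynomial.eval x (enumPoly kE c) = c ⬝ᵥ vVec kE m x := by
  simp only [enumPoly, map_sum, MvPolynomial.eval_monomial, dotProduct, vVec]
  refine Finset.sum_congr rfl fun i _ => ?_
  rw [Finsupp.prod_fintype _ _ fun _ => pow_zero _]
  rfl

theorem totalDegree_enumPoly_le {d : ℕ} {kE : ℕ → Fin d → ℕ} (h : IsMultiIndexEnum d kE) (l : ℕ)
    (c : Fin ((l + d).choose l) → ℝ) : (enumPoly kE c).totalDegree ≤ l := by
  refine (MvPolynomial.totalDegree_finsetSum _ _).trans (Finset.sup_le fun i _ => ?_)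
  refine (MvPolynomial.totalDegree_monomial_le _ _).trans ?_
  rw [Finsupp.sum_fintype _ _ fun _ => rfl]
  exact (h.lt_choose_iff l i).mp i.2

theorem coeff_enumPoly {d : ℕ} {kE : ℕ → Fin d → ℕ} (h : Function.Injective kE) {m : ℕ}
    (c : Fin m → ℝ) (i : Fin m) :
    (enumPoly kE c).coeff (Finsupp.equivFunOnFinite.symm (kE i)) = c i := by
  classical
  rw [enumPoly, MvPolynomial.coeff_sum, Finset.sum_eq_single i]
  · simp
  · intro j _ hj
    rw [MvPolynomial.coeff_monomial, if_neg]
    intro he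
    exact hj (Fin.ext (h (Finsupp.equivFunOnFinite.symm.injective he)))
  · simp

theorem det_vand_ne_zero {d : ℕ} {kE : ℕ → Fin d → ℕ} (h : IsMultiIndexEnum d kE) {l : ℕ}
    {w : Fin ((l + d).choose l) → Fin d → ℝ} {c : ℝ} (hw : IsNorming l (unitCube d) w c) :
    (vand kE ((l + d).choose l) w).det ≠ 0 := by
  intro hdet
  obtain ⟨a, ha, ha0⟩ := Matrix.exists_vecMul_eq_zero_iff.mpr hdet
  refine ha (funext fun i => ?_)
  have hev : ∀ j, MvPolynomial.eval (w j) (enumPoly kE a) = 0 := fun j => by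
    rw [eval_enumPoly]; exact congrFun ha0 j
  have hP : enumPoly kE a = 0 := eq_zero_of_eval_unitCube _ fun x hx => by
    have := hw _ (totalDegree_enumPoly_le h l a) x hx
    simp only [hev, abs_zero, Real.iSup_const_zero, mul_zero] at this
    exact abs_nonpos_iff.mp this
  rw [← coeff_enumPoly h.1.1 a i, hP, MvPolynomial.coeff_zero, Pi.zero_apply]

theorem injective_of_det_vand_ne_zero {d : ℕ} {kE : ℕ → Fin d → ℕ} {m : ℕ} {w : Fin m → Fin d → ℝ}
    (h : (vand kE m w).det ≠ 0) : Function.Injective w := by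
  intro i j hij
  by_contra hne
  exact h (Matrix.det_zero_of_column_eq hne fun k => by simp [vand, hij])

theorem det_maternMat_ne_zero {α : ℝ} (hα : 0 < α) {d m : ℕ} {w : Fin m → Fin d → ℝ}
    (hw : Function.Injective w) (hcube : ∀ i, w i ∈ unitCube d) {ν : ℝ} (h0 : 0 < ν)
    (h1 : ν ≤ 1) : (maternMat α d fun i t => ν * w i t).det ≠ 0 := by
  have hl : ((0 : ℕ) : ℝ) < α := by simpa using hα
  have h := det_spectralForm_ne_zero hl (linearIndependent_waveElem (l := 0)
    (y := fun i t => ν * w i t) (fun i j hij => hw (funext fun t =>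
      mul_left_cancel₀ h0.ne' (congrFun hij t))) fun i j t => ?_)
  · simp only [spectralForm_waveElem] at h
    exact h
  · rw [← mul_sub, abs_mul, abs_of_pos h0]
    have h2 : |w i t - w j t| ≤ 1 :=
      abs_le.mpr ⟨by linarith [(hcube i t).1, (hcube j t).2], by
        linarith [(hcube i t).2, (hcube j t).1]⟩
    exact mul_le_one₀ h1 (abs_nonneg _) h2

/-- Norming configurations in the unit cube. -/
def normingSet (d l m : ℕ) (c : ℝ) : Set (Fin m → Fin d → ℝ) :=
  {w | (∀ i, w i ∈ unitCube d) ∧ IsNorming l (unitCube d) w c}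

theorem isCompact_normingSet (d l : ℕ) {m : ℕ} (hm : 0 < m) (c : ℝ) :
    IsCompact (normingSet d l m c) := by
  have : Nonempty (Fin m) := ⟨⟨0, hm⟩⟩
  have h1 : IsCompact (Set.pi Set.univ fun _ : Fin m => unitCube d) :=
    isCompact_univ_pi fun _ => isCompact_unitCube d
  refine h1.of_isClosed_subset ?_ fun w hw i _ => hw.1 i
  have h2 : normingSet d l m c = (Set.pi Set.univ fun _ : Fin m => unitCube d) ∩
      ⋂ P : MvPolynomial (Fin d) ℝ, ⋂ _ : P.totalDegree ≤ l, ⋂ x ∈ unitCube d,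
        {w | |MvPolynomial.eval x P| ≤ c * ⨆ i : Fin m, |MvPolynomial.eval (w i) P|} := by
    ext w; simp [normingSet, IsNorming, Set.mem_pi]
  rw [h2]
  refine h1.isClosed.inter (isClosed_iInter fun P => isClosed_iInter fun _ =>
    isClosed_iInter fun x => isClosed_iInter fun _ =>
      isClosed_le continuous_const (continuous_const.mul ?_))
  simp only [← Finset.sup'_univ_eq_ciSup]
  refine Continuous.finset_sup'_apply _ fun i _ => ?_
  exact ((MvPolynomial.continuous_eval P).comp (continuous_apply i)).abs

theorem ContinuousOn.matrix_inv_of_det_ne_zero {X ι : Type*} [TopologicalSpace X] [Fintype ι]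
    [DecidableEq ι] {A : X → Matrix ι ι ℝ} {s : Set X} (hA : ContinuousOn A s)
    (h : ∀ x ∈ s, (A x).det ≠ 0) : ContinuousOn (fun x => (A x)⁻¹) s := by
  simp only [Matrix.inv_def, Ring.inverse_eq_inv']
  refine ContinuousOn.smul (ContinuousOn.inv₀ ?_ h) ?_
  · exact (Continuous.matrix_det continuous_id).comp_continuousOn hA
  · exact (Continuous.matrix_adjugate continuous_id).comp_continuousOn hA

theorem continuous_vand {d : ℕ} (kE : ℕ → Fin d → ℕ) (m : ℕ) : Continuous (vand kE m) := by
  refine continuous_matrix fun i j => ?_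
  simp only [vand, Matrix.of_apply]
  fun_prop

theorem continuous_vVec {d : ℕ} (kE : ℕ → Fin d → ℕ) (m : ℕ) : Continuous (vVec kE m) := by
  unfold vVec; fun_prop

theorem exists_bound_vand_inv {d : ℕ} {kE : ℕ → Fin d → ℕ} (h : IsMultiIndexEnum d kE) (l : ℕ)
    (c : ℝ) : ∃ C : ℝ, ∀ w ∈ normingSet d l ((l + d).choose l) c, ∀ i j,
      |(vand kE ((l + d).choose l) w)⁻¹ i j| ≤ C := by
  have hm : 0 < (l + d).choose l := Nat.choose_pos (Nat.le_add_right l d)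
  have hc : ContinuousOn (fun w => ∑ i, ∑ j, |(vand kE ((l + d).choose l) w)⁻¹ i j|)
      (normingSet d l ((l + d).choose l) c) := by
    have h1 := (continuous_vand kE ((l + d).choose l)).continuousOn.matrix_inv_of_det_ne_zero
      (s := normingSet d l ((l + d).choose l) c) fun w hw => det_vand_ne_zero h hw.2
    refine continuousOn_finsetSum _ fun i _ => continuousOn_finsetSum _ fun j _ => ?_
    exact ((continuous_id.matrix_elem i j).comp_continuousOn h1).abs
  obtain ⟨C, hC⟩ := (isCompact_normingSet d l hm c).exists_bound_of_continuousOn hc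
  refine ⟨C, fun w hw i j => le_trans ?_ ((le_abs_self _).trans (hC w hw))⟩
  refine le_trans ?_ (Finset.single_le_sum (f := fun i => ∑ j, _)
    (fun i _ => Finset.sum_nonneg fun j _ => abs_nonneg _) (Finset.mem_univ i))
  exact Finset.single_le_sum (f := fun j => |(vand kE ((l + d).choose l) w)⁻¹ i j|)
    (fun j _ => abs_nonneg _) (Finset.mem_univ j)

/-- The `ℓ¹` distance between the Matérn weights at scale `ν` and the polynomial weights. -/
def weightGap (α : ℝ) {d : ℕ} (kE : ℕ → Fin d → ℕ) {m : ℕ} (w : Fin m → Fin d → ℝ)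
    (x : Fin d → ℝ) (ν : ℝ) : ℝ :=
  ∑ i, |((maternMat α d (fun i t => ν * w i t))⁻¹ *ᵥ
        maternVec α d (fun i t => ν * w i t) (fun t => ν * x t)) i -
      ((vand kE m w)⁻¹ *ᵥ vVec kE m x) i|

theorem exists_bound_weightGap {α : ℝ} (hα : 0 < α) {d : ℕ} {kE : ℕ → Fin d → ℕ}
    (h : IsMultiIndexEnum d kE) (l : ℕ) (c : ℝ) {ν₀ : ℝ} (hν₀ : 0 < ν₀) :
    ∃ C : ℝ, 0 ≤ C ∧ ∀ w ∈ normingSet d l ((l + d).choose l) c, ∀ x ∈ unitCube d,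
      ∀ ν ∈ Set.Icc ν₀ 1, weightGap α kE w x ν ≤ C := by
  have hm : 0 < (l + d).choose l := Nat.choose_pos (Nat.le_add_right l d)
  set m := (l + d).choose l with hmdef
  set S : Set ((Fin m → Fin d → ℝ) × (Fin d → ℝ) × ℝ) :=
    normingSet d l m c ×ˢ unitCube d ×ˢ Set.Icc ν₀ 1 with hS
  have hScomp : IsCompact S :=
    (isCompact_normingSet d l hm c).prod ((isCompact_unitCube d).prod isCompact_Icc)
  have hV : ContinuousOn (fun z : (Fin m → Fin d → ℝ) × (Fin d → ℝ) × ℝ =>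
      (vand kE m z.1)⁻¹) S :=
    ((continuous_vand kE m).comp continuous_fst).continuousOn.matrix_inv_of_det_ne_zero
      fun z hz => det_vand_ne_zero h hz.1.2
  have hK : ContinuousOn (fun z : (Fin m → Fin d → ℝ) × (Fin d → ℝ) × ℝ =>
      (maternMat α d fun i t => z.2.2 * z.1 i t)⁻¹) S := by
    refine ContinuousOn.matrix_inv_of_det_ne_zero (Continuous.continuousOn ?_) fun z hz => ?_
    · refine continuous_matrix fun i j => (continuous_matern hα d).comp ?_
      fun_prop
    · exact det_maternMat_ne_zero hα (injective_of_det_vand_ne_zero (det_vand_ne_zero h hz.1.2))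
        hz.1.1 (hν₀.trans_le hz.2.2.1) hz.2.2.2
  have hkv : Continuous (fun z : (Fin m → Fin d → ℝ) × (Fin d → ℝ) × ℝ =>
      maternVec α d (fun i t => z.2.2 * z.1 i t) (fun t => z.2.2 * z.2.1 t)) := by
    refine continuous_pi fun i => (continuous_matern hα d).comp ?_
    fun_prop
  have hv : Continuous (fun z : (Fin m → Fin d → ℝ) × (Fin d → ℝ) × ℝ => vVec kE m z.2.1) :=
    (continuous_vVec kE m).comp (by fun_prop)
  have hmul : Continuous fun p : Matrix (Fin m) (Fin m) ℝ × (Fin m → ℝ) => p.1 *ᵥ p.2 :=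
    continuous_fst.matrix_mulVec continuous_snd
  have hG : ContinuousOn (fun z : (Fin m → Fin d → ℝ) × (Fin d → ℝ) × ℝ =>
      weightGap α kE z.1 z.2.1 z.2.2) S := by
    unfold weightGap
    refine continuousOn_finsetSum _ fun i _ => (ContinuousOn.sub ?_ ?_).abs
    · exact ((continuous_apply i).comp hmul).comp_continuousOn (hK.prodMk hkv.continuousOn)
    · exact ((continuous_apply i).comp hmul).comp_continuousOn (hV.prodMk hv.continuousOn)
  obtain ⟨C, hC⟩ := hScomp.exists_bound_of_continuousOn hG
  refine ⟨|C|, abs_nonneg C, fun w hw x hx ν hν => ?_⟩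
  exact (le_abs_self _).trans ((hC (w, x, ν) ⟨hw, hx, hν⟩).trans (le_abs_self C))

theorem abs_vVec_le_one {d : ℕ} (kE : ℕ → Fin d → ℕ) (m : ℕ) {x : Fin d → ℝ}
    (hx : x ∈ unitCube d) (i : Fin m) : |vVec kE m x i| ≤ 1 := by
  rw [vVec, Finset.abs_prod]
  refine Finset.prod_le_one (fun t _ => abs_nonneg _) fun t _ => ?_
  rw [abs_of_nonneg (pow_nonneg (hx t).1 _)]
  exact pow_le_one₀ (hx t).1 (hx t).2

/-- The Taylor remainder of the plane wave with frequency `ν y`. -/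
def remElem {d : ℕ} {kE : ℕ → Fin d → ℕ} (h : IsMultiIndexEnum d kE) (l : ℕ) (ν : ℝ)
    (y : Fin d → ℝ) : growthSpace d l :=
  waveElem d l (fun t => ν * y t) - ∑ k : Fin ((l + d).choose l),
    (vVec kE ((l + d).choose l) y k * ν ^ (∑ t, kE k t)) •
      monomialElem (kE k) ((h.lt_choose_iff l k).mp k.2)

theorem waveElem_eq {d : ℕ} {kE : ℕ → Fin d → ℕ} (h : IsMultiIndexEnum d kE) (l : ℕ) (ν : ℝ)
    (y : Fin d → ℝ) :
    waveElem d l (fun t => ν * y t) = ∑ k : Fin ((l + d).choose l),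
      (vVec kE ((l + d).choose l) y k * ν ^ (∑ t, kE k t)) •
        monomialElem (kE k) ((h.lt_choose_iff l k).mp k.2) + remElem h l ν y := by
  rw [remElem]; abel

theorem remElem_apply {d : ℕ} {kE : ℕ → Fin d → ℕ} (h : IsMultiIndexEnum d kE) (l : ℕ) (ν : ℝ)
    (y ξ : Fin d → ℝ) : (remElem h l ν y).1 ξ = expRem (l + 1) (∑ t, (ν * y t) * ξ t) := by
  have h1 := planeWave_eq_sum_add h l ν y ξ
  rw [remElem, Submodule.coe_sub, Pi.sub_apply, sub_eq_iff_eq_add']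
  refine h1.trans ?_
  congr 1
  rw [Submodule.coe_sum, Finset.sum_apply]
  refine Finset.sum_congr rfl fun k _ => ?_
  rw [Submodule.coe_smul, Pi.smul_apply, Complex.real_smul]
  rfl

theorem weightGap_le_of_integral_remEnvelope_le {α : ℝ} (hα : 0 < α) {d : ℕ} (hd : 1 ≤ d)
    {kE : ℕ → Fin d → ℕ} (h : IsMultiIndexEnum d kE) {l : ℕ} (hl : (l : ℝ) < α) (c : ℝ) :
    ∃ κ : ℝ, 0 < κ ∧ ∀ w ∈ normingSet d l ((l + d).choose l) c, ∀ x ∈ unitCube d,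
      ∀ ν ε : ℝ, 0 < ν → ν < 1 → 0 ≤ ε → κ * ε ≤ 1 / 2 →
        ((l + 5) ^ 2 * d ^ (2 * l + 2) *
          ∫ ξ : Fin d → ℝ, remEnvelope l ν ξ * maternWeight α d ξ) ≤ ε →
        weightGap α kE w x ν ≤ κ * ε := by
  set m := (l + d).choose l with hm
  have hdeg : ∀ k : Fin m, ∑ t, kE k t ≤ l := fun k => (h.lt_choose_iff l k).mp k.2
  let q : Fin m → growthSpace d l := fun k => monomialElem (kE k) (hdeg k)
  have hq : LinearIndependent ℝ q :=
    linearIndependent_monomialElem (fun i j hij => Fin.ext (h.1.1 hij)) hdeg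
  set M : Matrix (Fin m) (Fin m) ℝ := Matrix.of fun k j => spectralForm hl (q k) (q j) with hM
  have hMdet : M.det ≠ 0 := det_spectralForm_ne_zero hl hq
  obtain ⟨c₁, hc₁⟩ := exists_bound_vand_inv h l c
  set c₂ : ℝ := ∑ i, ∑ j, |M⁻¹ i j| with hc₂
  have hc₂0 : 0 ≤ c₂ := Finset.sum_nonneg fun i _ => Finset.sum_nonneg fun j _ => abs_nonneg _
  have hMb : ∀ i j, |M⁻¹ i j| ≤ c₂ := fun i j => by
    refine le_trans ?_ (Finset.single_le_sum (f := fun i => ∑ j, |M⁻¹ i j|)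
      (fun i _ => Finset.sum_nonneg fun j _ => abs_nonneg _) (Finset.mem_univ i))
    exact Finset.single_le_sum (f := fun j => |M⁻¹ i j|)
      (fun j _ => abs_nonneg _) (Finset.mem_univ j)
  obtain ⟨κ, hκ, hstab⟩ := galerkin_weights_stable (ι := Fin m) (spectralForm (d := d) hl)
    (c := max c₁ c₂) (hc₂0.trans (le_max_right _ _))
  refine ⟨κ, hκ, fun w hw x hx ν ε h0 h1 hε hsmall hI => ?_⟩
  have hVdet := det_vand_ne_zero h hw.2
  have hKdet := det_maternMat_ne_zero hα (injective_of_det_vand_ne_zero hVdet) hw.1 h0 h1.le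
  have hint := integrable_remEnvelope_mul_maternWeight hl d ν
  have hp : 0 < ν ^ l := pow_pos h0 l
  have hqR : ∀ y ∈ unitCube d, ∀ k, |spectralForm hl (q k) (remElem h l ν y)| ≤ ν ^ l * ε := by
    intro y hy k
    have h2 := abs_spectralForm_le hl (q k) (remElem h l ν y) hint fun ξ => by
      rw [remElem_apply]
      exact abs_re_conj_waveMonomial_mul_expRem_le hd h0 hy (hdeg k) ξ
    refine h2.trans (le_trans (le_of_eq ?_) (mul_le_mul_of_nonneg_left hI hp.le))
    ring
  have hRR : ∀ y ∈ unitCube d, ∀ y' ∈ unitCube d,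
      |spectralForm hl (remElem h l ν y) (remElem h l ν y')| ≤ (ν ^ l) ^ 2 * ε := by
    intro y hy y' hy'
    have h2 := abs_spectralForm_le hl (remElem h l ν y) (remElem h l ν y') hint fun ξ => by
      rw [remElem_apply, remElem_apply]
      exact abs_re_conj_expRem_mul_expRem_le hd h0 hy hy' ξ
    refine h2.trans (le_trans (le_of_eq ?_) (mul_le_mul_of_nonneg_left hI (sq_nonneg (ν ^ l))))
    ring
  refine hstab q (fun i => remElem h l ν (w i)) (remElem h l ν x) (vand kE m w) (vand kE m w)⁻¹
    M⁻¹ (vVec kE m x) (fun k => ν ^ (∑ t, kE k t))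
    ((maternMat α d (fun i t => ν * w i t))⁻¹ *ᵥ
      maternVec α d (fun i t => ν * w i t) (fun t => ν * x t))
    (ν ^ l) ε hp (fun k => pow_le_pow_of_le_one h0.le h1.le (hdeg k)) hε hsmall
    (Matrix.mul_nonsing_inv _ (isUnit_iff_ne_zero.mpr hVdet))
    (fun i j => (hc₁ w hw i j).trans (le_max_left _ _))
    (Matrix.nonsing_inv_mul _ (isUnit_iff_ne_zero.mpr hMdet))
    (fun i j => (hMb i j).trans (le_max_right _ _))
    (abs_vVec_le_one kE m hx) (fun k i => hqR _ (hw.1 i) k) (hqR x hx)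
    (fun k i => by rw [spectralForm_comm]; exact hqR _ (hw.1 i) k)
    (fun i j => hRR _ (hw.1 i) _ (hw.1 j)) (fun i => hRR _ (hw.1 i) _ hx) fun i => ?_
  have hwv : ∀ j, ∑ k, (vand kE m w k j * ν ^ (∑ t, kE k t)) • q k + remElem h l ν (w j) =
      waveElem d l (fun t => ν * w j t) := fun j => (waveElem_eq h l ν (w j)).symm
  have hxv : ∑ k, (vVec kE m x k * ν ^ (∑ t, kE k t)) • q k + remElem h l ν x =
      waveElem d l (fun t => ν * x t) := (waveElem_eq h l ν x).symm
  simp only [hwv, hxv]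
  rw [map_sub, map_sum]
  simp only [map_smul, smul_eq_mul, spectralForm_waveElem]
  have hsys : maternMat α d (fun i t => ν * w i t) *ᵥ ((maternMat α d (fun i t => ν * w i t))⁻¹ *ᵥ
      maternVec α d (fun i t => ν * w i t) (fun t => ν * x t)) =
      maternVec α d (fun i t => ν * w i t) (fun t => ν * x t) := by
    rw [Matrix.mulVec_mulVec, Matrix.mul_nonsing_inv _ (isUnit_iff_ne_zero.mpr hKdet),
      Matrix.one_mulVec]
  have hi := congrFun hsys i
  rw [sub_eq_zero]
  refine Eq.trans hi.symm ?_
  simp only [Matrix.mulVec, dotProduct]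
  exact Finset.sum_congr rfl fun j _ => mul_comm (matern α d _) _

theorem weightGap_le_mul_rate {α : ℝ} (hα : 0 < α) {d : ℕ} (hd : 1 ≤ d) {kE : ℕ → Fin d → ℕ}
    (h : IsMultiIndexEnum d kE) {l : ℕ} (hl : (l : ℝ) < α) (c : ℝ) {r : ℝ → ℝ}
    (hr : Filter.Tendsto r (nhdsWithin 0 (Set.Ioi 0)) (nhds 0))
    (hle : ∀ ν : ℝ, 0 < ν → ν < 1 → ν ≤ r ν) {C₁ : ℝ} (hC₁ : 0 ≤ C₁)
    (hint : ∀ ν : ℝ, 0 < ν → ν < 1 →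
      ∫ ξ : Fin d → ℝ, remEnvelope l ν ξ * maternWeight α d ξ ≤ C₁ * r ν) :
    ∃ C : ℝ, 0 < C ∧ ∀ w ∈ normingSet d l ((l + d).choose l) c, ∀ x ∈ unitCube d,
      ∀ ν : ℝ, 0 < ν → ν < 1 → weightGap α kE w x ν ≤ C * r ν := by
  obtain ⟨κ, hκ, hgap⟩ := weightGap_le_of_integral_remEnvelope_le hα hd h hl c
  set C₂ : ℝ := (l + 5) ^ 2 * d ^ (2 * l + 2) * C₁ with hC₂
  have hC₂0 : 0 ≤ C₂ := by positivity
  have hlim : Filter.Tendsto (fun ν => κ * (C₂ * r ν)) (nhdsWithin 0 (Set.Ioi 0)) (nhds 0) := by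
    simpa using (hr.const_mul C₂).const_mul κ
  obtain ⟨ν₀, hν₀, hsmall⟩ := mem_nhdsGT_iff_exists_Ioo_subset.mp
    (hlim.eventually (Iic_mem_nhds (show (0 : ℝ) < 1 / 2 by norm_num)))
  have hν₀' : (0 : ℝ) < ν₀ := hν₀
  obtain ⟨B, hB, hbig⟩ := exists_bound_weightGap hα h l c hν₀'
  refine ⟨κ * C₂ + B / ν₀ + 1, by positivity, fun w hw x hx ν h0 h1 => ?_⟩
  have hrν := hle ν h0 h1
  have hr0 : 0 ≤ r ν := h0.le.trans hrν
  rcases lt_or_ge ν ν₀ with hlt | hge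
  · have h2 := hgap w hw x hx ν (C₂ * r ν) h0 h1 (by positivity) (hsmall ⟨h0, hlt⟩) (by
      rw [hC₂, mul_assoc _ C₁]
      exact mul_le_mul_of_nonneg_left (hint ν h0 h1) (by positivity))
    refine h2.trans ?_
    have : 0 ≤ (B / ν₀ + 1) * r ν := by positivity
    linarith
  · have h2 := hbig w hw x hx ν ⟨hge, h1.le⟩
    have h3 : B ≤ B / ν₀ * r ν := by
      rw [div_mul_eq_mul_div, le_div_iff₀ hν₀']
      exact mul_le_mul_of_nonneg_left (hge.trans hrν) hB
    have : 0 ≤ (κ * C₂ + 1) * r ν := by positivity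
    linarith

/-- Lemma `GP flat`, first part: for a norming set `A ⊂ [0,1]^d` for
`𝒫_{⌊α⌋⁻}([0,1]^d)` with norming constant `c_N`, the Gaussian interpolation weights at scale
`ν ∈ (0,1)` converge to the polynomial interpolation weights:
`‖K_{νA,νA}⁻¹ K_{νA,νx} − V_A⁻¹ v_x‖₁ ≤ C (ν^{2(α−⌊α⌋⁻)} Λ + ν)`. -/
theorem stmt13 (α : ℝ) (hα : 0 < α) (d : ℕ) (hd : 1 ≤ d) (cN : ℝ) (hcN : 0 < cN)
    (kE : ℕ → Fin d → ℕ) (hkE : IsMultiIndexEnum d kE) :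
    ∃ C : ℝ, 0 < C ∧
      ∀ w : Fin ((lbelow α + d).choose (lbelow α)) → Fin d → ℝ,
        (∀ i, w i ∈ unitCube d) →
        IsNorming (lbelow α) (unitCube d) w cN →
        ∀ x ∈ unitCube d, ∀ ν : ℝ, 0 < ν → ν < 1 →
          IsUnit (maternMat α d (fun i t => ν * w i t)).det ∧
          (¬ IsNatVal α →
            (∑ i, |((maternMat α d (fun i t => ν * w i t))⁻¹ *ᵥ
                  maternVec α d (fun i t => ν * w i t) (fun t => ν * x t)) i -
                ((vand kE ((lbelow α + d).choose (lbelow α)) w)⁻¹ *ᵥ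
                  vVec kE ((lbelow α + d).choose (lbelow α)) x) i|) ≤
              C * (ν ^ (2 * (α - (lbelow α : ℝ))) + ν)) ∧
          (IsNatVal α →
            (∑ i, |((maternMat α d (fun i t => ν * w i t))⁻¹ *ᵥ
                  maternVec α d (fun i t => ν * w i t) (fun t => ν * x t)) i -
                ((vand kE ((lbelow α + d).choose (lbelow α)) w)⁻¹ *ᵥ
                  vVec kE ((lbelow α + d).choose (lbelow α)) x) i|) ≤
              C * (ν ^ (2 * (α - (lbelow α : ℝ))) * Real.log (1 / ν) + ν)) := by
  have hl := lbelow_lt hα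
  have hunit : ∀ w : Fin ((lbelow α + d).choose (lbelow α)) → Fin d → ℝ,
      (∀ i, w i ∈ unitCube d) → IsNorming (lbelow α) (unitCube d) w cN → ∀ ν : ℝ, 0 < ν → ν < 1 →
      IsUnit (maternMat α d (fun i t => ν * w i t)).det := fun w hw hN ν h0 h1 =>
    isUnit_iff_ne_zero.mpr (det_maternMat_ne_zero hα
      (injective_of_det_vand_ne_zero (det_vand_ne_zero hkE hN)) hw h0 h1.le)
  have hid : Filter.Tendsto (fun ν : ℝ => ν) (nhdsWithin 0 (Set.Ioi 0)) (nhds 0) :=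
    nhdsWithin_le_nhds
  by_cases hn : IsNatVal α
  · obtain ⟨C₁, hC₁, hint⟩ := integral_remEnvelope_le_of_integer (eq_lbelow_add_one hα hn) d
    obtain ⟨C, hC, hgap⟩ := weightGap_le_mul_rate hα hd hkE hl cN hid
      (fun ν _ _ => le_rfl) hC₁ hint
    refine ⟨C, hC, fun w hw hN x hx ν h0 h1 => ⟨hunit w hw hN ν h0 h1, fun h => absurd hn h,
      fun _ => (hgap w ⟨hw, hN⟩ x hx ν h0 h1).trans ?_⟩⟩
    have hlog : 0 ≤ Real.log (1 / ν) := Real.log_nonneg ((one_le_div h0).mpr h1.le)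
    have : 0 ≤ ν ^ (2 * (α - (lbelow α : ℝ))) * Real.log (1 / ν) :=
      mul_nonneg (Real.rpow_nonneg h0.le _) hlog
    exact mul_le_mul_of_nonneg_left (by linarith) hC.le
  · obtain ⟨C₁, hC₁, hint⟩ := integral_remEnvelope_le hd hl (lt_lbelow_add_one hα hn)
    have hδ : 0 < 2 * (α - (lbelow α : ℝ)) := by linarith
    have hr : Filter.Tendsto (fun ν : ℝ => ν ^ (2 * (α - (lbelow α : ℝ))) + ν)
        (nhdsWithin 0 (Set.Ioi 0)) (nhds 0) := by
      have h1 := (Real.continuousAt_rpow_const 0 _ (Or.inr hδ.le)).tendsto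
      rw [Real.zero_rpow hδ.ne'] at h1
      simpa using (h1.mono_left nhdsWithin_le_nhds).add hid
    obtain ⟨C, hC, hgap⟩ := weightGap_le_mul_rate hα hd hkE hl cN hr
      (fun ν h0 _ => le_add_of_nonneg_left (Real.rpow_nonneg h0.le _)) hC₁ hint
    exact ⟨C, hC, fun w hw hN x hx ν h0 h1 => ⟨hunit w hw hN ν h0 h1,
      fun _ => hgap w ⟨hw, hN⟩ x hx ν h0 h1, fun h => absurd h hn⟩⟩
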